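/- arXiv:2210.09093 — 10 statements merged into one kernel-verified Lean document; each statement's English description precedes it below -/
import Mathlib

section
/- Let (E,μ) be a measure space and g a bounded measurable function on E such that for some constants C > 0 and δ > 0, for all a > 0 one has μ({x ∈ E : |g(x)| < a}) ≤ C a^δ. Let ε > 0 with δ < ε. Then there is a constant D > 0, depending only on δ and ε, such that for all λ ≠ 0, ∫_E min(1, |λ g(x)|^{−ε}) dμ(x) ≤ C·D·|λ|^{−δ}. -/
open MeasureTheory

/-!
By the layer cake formula, a function bounded by `1` with `μ {t < f} ≤ K t ^ (-p)` for some `p < 1`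
has integral at most `K ∫₀¹ t ^ (-p) dt = K / (1 - p)`. For `0 < t < 1`, the set where
`min 1 (|λ g| ^ (-ε))` exceeds `t` is `{|g| < t ^ (-1 / ε) / |λ|}`, so the sublevel set hypothesis
gives such a bound with `p = δ / ε` and `K = C |λ| ^ (-δ)`. This yields `D = ε / (ε - δ)`.
-/

open Set

section LayerCake

variable {α : Type*} [MeasurableSpace α]

lemma lintegral_ofReal_le_lintegral_meas_lt (μ : Measure α) (f : α → ℝ) :
    ∫⁻ x, ENNReal.ofReal (f x) ∂μ ≤ ∫⁻ t in Ioi 0, μ {x | t < f x} := by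
  -- Simple functions below `f` are measurable even when `f` is not; the layer cake applies to them.
  rw [lintegral_eq_nnreal]
  refine iSup₂_le fun φ hφ => ?_
  have layer_cake : (φ.map ((↑) : NNReal → ENNReal)).lintegral μ =
      ∫⁻ t in Ioi 0, μ {x | t < (φ x : ℝ)} := by
    rw [← SimpleFunc.lintegral_eq_lintegral, ← lintegral_eq_lintegral_meas_lt μ
      (.of_forall fun x => (φ x).coe_nonneg) φ.measurable.coe_nnreal_real.aemeasurable]
    simp
  rw [layer_cake]
  refine setLIntegral_mono' measurableSet_Ioi fun t ht => measure_mono fun x hx => ?_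
  have hφx : (φ x : ℝ) ≤ max (f x) 0 := by
    simpa only [Real.coe_toNNReal'] using NNReal.coe_le_coe.mpr (ENNReal.coe_le_coe.mp (hφ x))
  exact (lt_max_iff.mp (hx.trans_le hφx)).resolve_right ht.le.not_gt

lemma setLIntegral_Ioo_zero_one_rpow_neg {p : ℝ} (hp : p < 1) :
    ∫⁻ t in Ioo (0 : ℝ) 1, ENNReal.ofReal (t ^ (-p)) = ENNReal.ofReal (1 - p)⁻¹ := by
  have hp' : -1 < -p := neg_lt_neg hp
  rw [← ofReal_integral_eq_lintegral_ofReal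
    ((intervalIntegral.integrableOn_Ioo_rpow_iff one_pos).mpr hp')
    (ae_restrict_of_forall_mem measurableSet_Ioo fun t ht => Real.rpow_nonneg ht.1.le _),
    ← integral_Ioc_eq_integral_Ioo, ← intervalIntegral.integral_of_le zero_le_one,
    integral_rpow (.inl hp'), Real.one_rpow, Real.zero_rpow (by linarith), sub_zero, one_div,
    neg_add_eq_sub]

lemma lintegral_ofReal_le_of_meas_lt_le_rpow_neg {μ : Measure α} {f : α → ℝ} {K : ENNReal} {p : ℝ}
    (hp : p < 1) (hf : ∀ x, f x ≤ 1)
    (hμ : ∀ t ∈ Ioo (0 : ℝ) 1, μ {x | t < f x} ≤ K * ENNReal.ofReal (t ^ (-p))) :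
    ∫⁻ x, ENNReal.ofReal (f x) ∂μ ≤ K * ENNReal.ofReal (1 - p)⁻¹ := by
  have meas_eq_zero : EqOn (fun t : ℝ => μ {x | t < f x}) 0 (Ici 1) := fun t ht => by
    simp [fun x => ((hf x).trans ht).not_gt]
  calc ∫⁻ x, ENNReal.ofReal (f x) ∂μ
      ≤ ∫⁻ t in Ioi 0, μ {x | t < f x} := lintegral_ofReal_le_lintegral_meas_lt μ f
    _ ≤ (∫⁻ t in Ioo 0 1, μ {x | t < f x}) + ∫⁻ t in Ici 1, μ {x | t < f x} := by
        rw [← Ioo_union_Ici_eq_Ioi zero_lt_one]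
        exact lintegral_union_le _ _ _
    _ = ∫⁻ t in Ioo 0 1, μ {x | t < f x} := by
        rw [setLIntegral_eq_zero measurableSet_Ici meas_eq_zero, add_zero]
    _ ≤ ∫⁻ t in Ioo 0 1, K * ENNReal.ofReal (t ^ (-p)) := setLIntegral_mono' measurableSet_Ioo hμ
    _ = K * ∫⁻ t in Ioo (0 : ℝ) 1, ENNReal.ofReal (t ^ (-p)) :=
        lintegral_const_mul _ (by fun_prop)
    _ = K * ENNReal.ofReal (1 - p)⁻¹ := by rw [setLIntegral_Ioo_zero_one_rpow_neg hp]

end LayerCake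

section SublevelSets

variable {𝕜 F : Type*} [NormedField 𝕜] [NormedAddCommGroup F] [NormedSpace 𝕜 F] [DecidableEq F]

lemma norm_lt_rpow_div_of_lt_min_one_rpow_neg {ε t : ℝ} (hε : 0 < ε) (ht : 0 < t) {lam : 𝕜}
    (hlam : lam ≠ 0) {y : F}
    (h : t < if y = 0 then 1 else min 1 (‖lam • y‖ ^ (-ε))) : ‖y‖ < t ^ (-ε)⁻¹ / ‖lam‖ := by
  have hlam' : 0 < ‖lam‖ := norm_pos_iff.mpr hlam
  split_ifs at h with hy
  · rw [hy, norm_zero]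
    positivity
  · have hy' : 0 < ‖lam • y‖ := norm_pos_iff.mpr (smul_ne_zero hlam hy)
    rw [lt_div_iff₀' hlam', ← norm_smul, Real.lt_rpow_inv_iff_of_neg hy' ht (neg_neg_of_pos hε)]
    exact h.trans_le (min_le_right _ _)

theorem stmt7_general {δ ε : ℝ} (hε : 0 < ε) (hδε : δ < ε) {E : Type*} [MeasurableSpace E]
    {μ : Measure E} {g : E → F} {C : ℝ} (hC : 0 ≤ C)
    (hμ : ∀ a : ℝ, 0 < a → μ {x | ‖g x‖ < a} ≤ ENNReal.ofReal (C * a ^ δ))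
    {lam : 𝕜} (hlam : lam ≠ 0) :
    ∫⁻ x, ENNReal.ofReal (if g x = 0 then (1 : ℝ) else min 1 (‖lam • g x‖ ^ (-ε))) ∂μ ≤
      ENNReal.ofReal (C * (ε / (ε - δ)) * ‖lam‖ ^ (-δ)) := by
  have hlam' : 0 < ‖lam‖ := norm_pos_iff.mpr hlam
  have hp : δ / ε < 1 := (div_lt_one hε).mpr hδε
  have le_one (x : E) : (if g x = 0 then (1 : ℝ) else min 1 (‖lam • g x‖ ^ (-ε))) ≤ 1 := by
    split_ifs
    exacts [le_rfl, min_le_left _ _]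
  have rpow_scaled (t : ℝ) (ht : 0 < t) :
      (t ^ (-ε)⁻¹ / ‖lam‖) ^ δ = ‖lam‖ ^ (-δ) * t ^ (-(δ / ε)) := by
    rw [Real.div_rpow (by positivity) hlam'.le, ← Real.rpow_mul ht.le, Real.rpow_neg hlam'.le,
      inv_neg, neg_mul, inv_mul_eq_div, div_eq_inv_mul]
  have constant_eq : C * (ε / (ε - δ)) * ‖lam‖ ^ (-δ) =
      C * ‖lam‖ ^ (-δ) * (1 - δ / ε)⁻¹ := by
    rw [one_sub_div hε.ne', inv_div, mul_right_comm]
  rw [constant_eq, ENNReal.ofReal_mul (by positivity)]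
  refine lintegral_ofReal_le_of_meas_lt_le_rpow_neg hp le_one fun t ⟨ht, _⟩ => ?_
  rw [← ENNReal.ofReal_mul (by positivity), mul_assoc, ← rpow_scaled t ht]
  exact (measure_mono fun x hx => norm_lt_rpow_div_of_lt_min_one_rpow_neg hε ht hlam hx).trans
    (hμ _ (by positivity))

end SublevelSets

/-- **Lemma 3.1, case δ < ε.** Let `0 < δ < ε`. There is a constant `D > 0` depending only on
`δ` and `ε` such that: for every measure space `(E,μ)`, every bounded measurable `g : E → ℝ`,
and every `C > 0` with `μ{x : |g(x)| < a} ≤ C aᵟ` for all `a > 0`, one has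
`∫_E min(1, |λ g|^{-ε}) dμ ≤ C·D·|λ|^{-δ}` for all `λ ≠ 0`. The integrand is interpreted as
`1` at points where `g(x) = 0` (since `|λ g(x)|^{-ε}` is `+∞` there). -/
theorem stmt7 (δ ε : ℝ) (hδ : 0 < δ) (hδε : δ < ε) :
    ∃ D : ℝ, 0 < D ∧
      ∀ (E : Type*) [MeasurableSpace E] (μ : Measure E) (g : E → ℝ), Measurable g →
      (∃ M₀ : ℝ, ∀ x, |g x| ≤ M₀) →
      ∀ C : ℝ, 0 < C →
      (∀ a : ℝ, 0 < a → μ {x | |g x| < a} ≤ ENNReal.ofReal (C * a ^ δ)) →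
      ∀ lam : ℝ, lam ≠ 0 →
        (∫⁻ x, ENNReal.ofReal
            (if g x = 0 then (1 : ℝ) else min 1 (|lam * g x| ^ (-ε))) ∂μ) ≤
          ENNReal.ofReal (C * D * |lam| ^ (-δ)) := by
  exact ⟨ε / (ε - δ), div_pos (hδ.trans hδε) (sub_pos.mpr hδε),
    fun _ _ _ _ _ _ _ hC hμ _ hlam => stmt7_general (hδ.trans hδε) hδε hC.le hμ hlam⟩
end

section
/- Let (E,μ) be a measure space and g a bounded measurable function on E such that for some constants C > 0 and δ > 0, for all a > 0 one has μ({x ∈ E : |g(x)| < a}) ≤ C a^δ. Let M = sup_E |g| and let ε > 0 with δ > ε. Then there is a constant D > 0, depending only on δ and ε, such that for all λ ≠ 0, ∫_E min(1, |λ g(x)|^{−ε}) dμ(x) ≤ C( |λ|^{−δ} + D·|λ|^{−ε}·M^{δ−ε} ). -/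
open MeasureTheory

/-!
The sublevel bound says that `u = |g|⁻¹` lies in weak `L^δ`: `μ {u > t} ≤ C t^(-δ)`. Letting `a`
decrease to `0` and to `M` shows that `g ≠ 0` almost everywhere and that the whole space has measure
at most `C M^δ`. In the layer-cake formula `∫ u^ε = ε ∫ μ {u > t} t^(ε-1) dt`, bounding the
distribution function by `C M^δ` for `t ≤ M⁻¹` and by `C t^(-δ)` for `t > M⁻¹` gives
`∫ |g|^(-ε) ≤ C (1 + ε / (δ - ε)) M^(δ-ε)`. So `D = δ / (δ - ε)` works, and the bound already
holds without the truncation at `1` and without the term `|λ|^(-δ)`.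
-/

open Set Filter

section PowerIntegrals

variable {p s : ℝ}

lemma lintegral_Ioc_zero_ofReal_rpow_sub_one (hp : 0 < p) (hs : 0 ≤ s) :
    ∫⁻ t in Ioc 0 s, ENNReal.ofReal (t ^ (p - 1)) = ENNReal.ofReal (s ^ p / p) := by
  have hint : IntegrableOn (fun t : ℝ => t ^ (p - 1)) (Ioc 0 s) :=
    (intervalIntegrable_iff_integrableOn_Ioc_of_le hs).1
      (intervalIntegral.intervalIntegrable_rpow' (by linarith))
  rw [← ofReal_integral_eq_lintegral_ofReal hint
      ((ae_restrict_mem measurableSet_Ioc).mono fun t ht => Real.rpow_nonneg ht.1.le _),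
    ← intervalIntegral.integral_of_le hs, integral_rpow (Or.inl (by linarith)), sub_add_cancel,
    Real.zero_rpow hp.ne', sub_zero]

lemma lintegral_Ioi_ofReal_rpow_neg_sub_one (hp : 0 < p) (hs : 0 < s) :
    ∫⁻ t in Ioi s, ENNReal.ofReal (t ^ (-p - 1)) = ENNReal.ofReal (s ^ (-p) / p) := by
  have hexp : -p - 1 < -1 := by linarith
  rw [← ofReal_integral_eq_lintegral_ofReal (integrableOn_Ioi_rpow_of_lt hexp hs)
      ((ae_restrict_mem measurableSet_Ioi).mono fun t ht => Real.rpow_nonneg (hs.trans ht).le _),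
    integral_Ioi_rpow_of_lt hexp hs, sub_add_cancel, neg_div_neg_eq]

end PowerIntegrals

section DistributionFunctions

variable {α : Type*} [MeasurableSpace α] {μ : Measure α}

lemma measure_le_le_of_forall_measure_lt_le {β : Type*} [LinearOrder β] [TopologicalSpace β]
    [OrderTopology β] [DenselyOrdered β] [NoMaxOrder β] {f : α → β} {φ : β → ENNReal} {a : β}
    (hφ : ContinuousWithinAt φ (Ioi a) a) (h : ∀ b, a < b → μ {x | f x < b} ≤ φ b) :
    μ {x | f x ≤ a} ≤ φ a := by
  refine ge_of_tendsto hφ ?_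
  filter_upwards [self_mem_nhdsWithin] with b hb
  exact (measure_mono fun x hx => lt_of_le_of_lt hx hb).trans (h b hb)

/-- Kolmogorov's inequality from weak `L^q` to `L^p`, with the splitting height `s` left free
instead of being optimised. -/
lemma lintegral_rpow_le_of_measure_gt_le {u : α → ℝ} (hu : 0 ≤ᵐ[μ] u) (hum : AEMeasurable u μ)
    {p q s : ℝ} (hp : 0 < p) (hpq : p < q) (hs : 0 < s) {C : ENNReal}
    (h : ∀ t, s < t → μ {x | t < u x} ≤ C * ENNReal.ofReal (t ^ (-q))) :
    ∫⁻ x, ENNReal.ofReal (u x ^ p) ∂μ ≤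
      μ univ * ENNReal.ofReal (s ^ p) + C * ENNReal.ofReal (p / (q - p) * s ^ (p - q)) := by
  have hlow : ∫⁻ t in Ioc 0 s, μ {x | t < u x} * ENNReal.ofReal (t ^ (p - 1)) ≤
      μ univ * ENNReal.ofReal (s ^ p / p) := by
    rw [← lintegral_Ioc_zero_ofReal_rpow_sub_one hp hs.le, ← lintegral_const_mul _ (by fun_prop)]
    gcongr
    exact subset_univ _
  have hhigh : ∫⁻ t in Ioi s, μ {x | t < u x} * ENNReal.ofReal (t ^ (p - 1)) ≤
      C * ENNReal.ofReal (s ^ (p - q) / (q - p)) := by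
    rw [← neg_sub q p, ← lintegral_Ioi_ofReal_rpow_neg_sub_one (sub_pos.2 hpq) hs,
      ← lintegral_const_mul _ (by fun_prop)]
    refine setLIntegral_mono (by fun_prop) fun t ht => ?_
    have ht0 : 0 < t := hs.trans ht
    calc μ {x | t < u x} * ENNReal.ofReal (t ^ (p - 1))
        ≤ C * ENNReal.ofReal (t ^ (-q)) * ENNReal.ofReal (t ^ (p - 1)) := by gcongr; exact h t ht
      _ = C * ENNReal.ofReal (t ^ (-(q - p) - 1)) := by
        rw [mul_assoc, ← ENNReal.ofReal_mul (by positivity), ← Real.rpow_add ht0]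
        ring_nf
  calc ∫⁻ x, ENNReal.ofReal (u x ^ p) ∂μ
      = ENNReal.ofReal p *
          ∫⁻ t in Ioc 0 s ∪ Ioi s, μ {x | t < u x} * ENNReal.ofReal (t ^ (p - 1)) := by
        rw [lintegral_rpow_eq_lintegral_meas_lt_mul μ hu hum hp, Ioc_union_Ioi_eq_Ioi hs.le]
    _ ≤ ENNReal.ofReal p * (μ univ * ENNReal.ofReal (s ^ p / p) +
          C * ENNReal.ofReal (s ^ (p - q) / (q - p))) := by
        gcongr
        exact (lintegral_union_le _ _ _).trans (add_le_add hlow hhigh)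
    _ = μ univ * ENNReal.ofReal (s ^ p) + C * ENNReal.ofReal (p / (q - p) * s ^ (p - q)) := by
        rw [mul_add, mul_left_comm, mul_left_comm _ C, ← ENNReal.ofReal_mul hp.le,
          ← ENNReal.ofReal_mul hp.le, mul_div_cancel₀ _ hp.ne', mul_div_left_comm, mul_comm (s ^ _)]

section SublevelBound

variable {f : α → ℝ} {C M δ ε : ℝ}

lemma measure_le_le_of_measure_lt_le_rpow (hδ : 0 ≤ δ)
    (h : ∀ a, 0 < a → μ {x | f x < a} ≤ ENNReal.ofReal (C * a ^ δ)) {a : ℝ} (ha : 0 ≤ a) :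
    μ {x | f x ≤ a} ≤ ENNReal.ofReal (C * a ^ δ) := by
  have hcont : Continuous fun b : ℝ => ENNReal.ofReal (C * b ^ δ) :=
    ENNReal.continuous_ofReal.comp (continuous_const.mul (Real.continuous_rpow_const hδ))
  exact measure_le_le_of_forall_measure_lt_le hcont.continuousWithinAt
    fun b hb => h b (ha.trans_lt hb)

lemma ae_pos_of_measure_lt_le_rpow (hδ : 0 < δ)
    (h : ∀ a, 0 < a → μ {x | f x < a} ≤ ENNReal.ofReal (C * a ^ δ)) :
    ∀ᵐ x ∂μ, 0 < f x := by
  have hzero : μ {x | f x ≤ 0} ≤ 0 := by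
    simpa only [Real.zero_rpow hδ.ne', mul_zero, ENNReal.ofReal_zero] using
      measure_le_le_of_measure_lt_le_rpow hδ.le h le_rfl
  simpa only [ae_iff, not_lt] using nonpos_iff_eq_zero.1 hzero

lemma measure_univ_le_of_measure_lt_le_rpow (hδ : 0 ≤ δ) (hM : 0 ≤ M)
    (hfM : ∀ᵐ x ∂μ, f x ≤ M)
    (h : ∀ a, 0 < a → μ {x | f x < a} ≤ ENNReal.ofReal (C * a ^ δ)) :
    μ univ ≤ ENNReal.ofReal (C * M ^ δ) :=
  (measure_mono_ae (hfM.mono fun _ hx _ => hx)).trans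
    (measure_le_le_of_measure_lt_le_rpow hδ h hM)

lemma measure_lt_inv_le_of_measure_lt_le_rpow
    (h : ∀ a, 0 < a → μ {x | f x < a} ≤ ENNReal.ofReal (C * a ^ δ)) {t : ℝ} (ht : 0 < t) :
    μ {x | t < (f x)⁻¹} ≤ ENNReal.ofReal (C * t ^ (-δ)) := by
  rw [Real.rpow_neg ht.le, ← Real.inv_rpow ht.le]
  refine (measure_mono fun x hx => ?_).trans (h t⁻¹ (inv_pos.2 ht))
  exact (lt_inv_comm₀ ht (inv_pos.1 (ht.trans hx))).1 hx

lemma rpow_mul_inv_rpow_add_div_mul_inv_rpow (hM : 0 < M) (hδε : ε < δ) :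
    M ^ δ * M⁻¹ ^ ε + ε / (δ - ε) * M⁻¹ ^ (ε - δ) = δ / (δ - ε) * M ^ (δ - ε) := by
  have hgap : δ - ε ≠ 0 := (sub_pos.2 hδε).ne'
  have hlow : M ^ δ * M⁻¹ ^ ε = M ^ (δ - ε) := by
    rw [Real.inv_rpow hM.le, Real.rpow_sub hM, div_eq_mul_inv]
  have hhigh : M⁻¹ ^ (ε - δ) = M ^ (δ - ε) := by
    rw [Real.inv_rpow hM.le, ← Real.rpow_neg hM.le, neg_sub]
  rw [hlow, hhigh]
  field_simp
  ring

lemma lintegral_rpow_neg_le_of_measure_lt_le_rpow (hε : 0 < ε) (hδε : ε < δ)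
    (hf : AEMeasurable f μ) (hfM : ∀ᵐ x ∂μ, f x ≤ M)
    (h : ∀ a, 0 < a → μ {x | f x < a} ≤ ENNReal.ofReal (C * a ^ δ)) :
    ∫⁻ x, ENNReal.ofReal (f x) ^ (-ε) ∂μ ≤
      ENNReal.ofReal (C * (δ / (δ - ε) * M ^ (δ - ε))) := by
  rcases eq_or_ne μ 0 with rfl | hμ
  · simp
  have := ae_neBot.2 hμ
  have hδ : 0 < δ := hε.trans hδε
  have : 0 < δ - ε := sub_pos.2 hδε
  have hpos : ∀ᵐ x ∂μ, 0 < f x := ae_pos_of_measure_lt_le_rpow hδ h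
  obtain ⟨x₀, hx₀, hx₀M⟩ := (hpos.and hfM).exists
  have hM : 0 < M := hx₀.trans_le hx₀M
  have hweak (t : ℝ) (ht : M⁻¹ < t) :
      μ {x | t < (f x)⁻¹} ≤ ENNReal.ofReal C * ENNReal.ofReal (t ^ (-δ)) := by
    have ht0 : 0 < t := (inv_pos.2 hM).trans ht
    rw [← ENNReal.ofReal_mul' (by positivity)]
    exact measure_lt_inv_le_of_measure_lt_le_rpow h ht0
  calc ∫⁻ x, ENNReal.ofReal (f x) ^ (-ε) ∂μ
      = ∫⁻ x, ENNReal.ofReal ((f x)⁻¹ ^ ε) ∂μ := by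
        refine lintegral_congr_ae (hpos.mono fun x hx => ?_)
        simp only [ENNReal.ofReal_rpow_of_pos hx, Real.rpow_neg hx.le, Real.inv_rpow hx.le]
    _ ≤ μ univ * ENNReal.ofReal (M⁻¹ ^ ε) +
          ENNReal.ofReal C * ENNReal.ofReal (ε / (δ - ε) * M⁻¹ ^ (ε - δ)) :=
        lintegral_rpow_le_of_measure_gt_le (hpos.mono fun x hx => (inv_pos.2 hx).le) hf.inv
          hε hδε (inv_pos.2 hM) hweak
    _ ≤ ENNReal.ofReal C * ENNReal.ofReal (M ^ δ) * ENNReal.ofReal (M⁻¹ ^ ε) +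
          ENNReal.ofReal C * ENNReal.ofReal (ε / (δ - ε) * M⁻¹ ^ (ε - δ)) := by
        gcongr
        rw [← ENNReal.ofReal_mul' (by positivity)]
        exact measure_univ_le_of_measure_lt_le_rpow hδ.le hM.le hfM h
    _ = ENNReal.ofReal C *
          ENNReal.ofReal (M ^ δ * M⁻¹ ^ ε + ε / (δ - ε) * M⁻¹ ^ (ε - δ)) := by
        rw [ENNReal.ofReal_add (by positivity) (by positivity),
          ENNReal.ofReal_mul (p := M ^ δ) (by positivity), mul_add, mul_assoc]
    _ = ENNReal.ofReal (C * (δ / (δ - ε) * M ^ (δ - ε))) := by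
        rw [rpow_mul_inv_rpow_add_div_mul_inv_rpow hM hδε, ← ENNReal.ofReal_mul' (by positivity)]

end SublevelBound

end DistributionFunctions

lemma ofReal_ite_min_one_abs_rpow_neg_le_enorm_rpow_neg {ε : ℝ} (hε : 0 < ε) (a y : ℝ) :
    ENNReal.ofReal (if y = 0 then 1 else min 1 (|a * y| ^ (-ε))) ≤ ‖a * y‖ₑ ^ (-ε) := by
  rcases eq_or_ne (a * y) 0 with hzero | hne
  · rw [hzero, enorm_zero, ENNReal.zero_rpow_of_neg (neg_lt_zero.2 hε)]
    exact le_top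
  · rw [if_neg (right_ne_zero_of_mul hne), Real.enorm_eq_ofReal_abs,
      ENNReal.ofReal_rpow_of_pos (abs_pos.2 hne)]
    exact ENNReal.ofReal_le_ofReal (min_le_right _ _)

/-- The integrand is `∞` where `g` vanishes, since `0 ^ (-ε) = ∞` in `ℝ≥0∞`. -/
theorem stmt9_general {α F : Type*} [MeasurableSpace α] {μ : Measure α}
    [SeminormedAddCommGroup F] [NormedSpace ℝ F] {g : α → F}
    {C M δ ε lam : ℝ} (hε : 0 < ε) (hδε : ε < δ) (hg : AEMeasurable (fun x => ‖g x‖) μ)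
    (hgM : ∀ᵐ x ∂μ, ‖g x‖ ≤ M)
    (hμ : ∀ a, 0 < a → μ {x | ‖g x‖ < a} ≤ ENNReal.ofReal (C * a ^ δ)) (hlam : lam ≠ 0) :
    ∫⁻ x, ‖lam • g x‖ₑ ^ (-ε) ∂μ ≤
      ENNReal.ofReal (C * (δ / (δ - ε) * |lam| ^ (-ε) * M ^ (δ - ε))) := by
  have hlam_rpow : ‖lam‖ₑ ^ (-ε) = ENNReal.ofReal (|lam| ^ (-ε)) := by
    rw [Real.enorm_eq_ofReal_abs, ENNReal.ofReal_rpow_of_pos (abs_pos.2 hlam)]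
  calc ∫⁻ x, ‖lam • g x‖ₑ ^ (-ε) ∂μ
      = ENNReal.ofReal (|lam| ^ (-ε)) * ∫⁻ x, ENNReal.ofReal ‖g x‖ ^ (-ε) ∂μ := by
        rw [← lintegral_const_mul' _ _ ENNReal.ofReal_ne_top]
        simp only [enorm_smul, ENNReal.mul_rpow_of_ne_top enorm_ne_top enorm_ne_top, hlam_rpow,
          ofReal_norm]
    _ ≤ ENNReal.ofReal (|lam| ^ (-ε)) * ENNReal.ofReal (C * (δ / (δ - ε) * M ^ (δ - ε))) := by
        gcongr
        exact lintegral_rpow_neg_le_of_measure_lt_le_rpow hε hδε hg hgM hμ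
    _ = ENNReal.ofReal (C * (δ / (δ - ε) * |lam| ^ (-ε) * M ^ (δ - ε))) := by
        rw [← ENNReal.ofReal_mul (by positivity)]
        ring_nf

/-- **Lemma 3.1, case δ > ε.** Let `δ > ε > 0`. There is a constant `D > 0` depending only on
`δ` and `ε` such that: for every measure space `(E,μ)`, every bounded measurable `g : E → ℝ`,
and every `C > 0` with `μ{x : |g(x)| < a} ≤ C aᵟ` for all `a > 0`, writing `M = esssup_E |g|`,
one has `∫_E min(1, |λ g|^{-ε}) dμ ≤ C(|λ|^{-δ} + D·|λ|^{-ε}·M^{δ-ε})` for all `λ ≠ 0`.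
The integrand is interpreted as `1` where `g(x) = 0`. -/
theorem stmt9 (δ ε : ℝ) (hε : 0 < ε) (hδε : ε < δ) :
    ∃ D : ℝ, 0 < D ∧
      ∀ (E : Type*) [MeasurableSpace E] (μ : Measure E) (g : E → ℝ), Measurable g →
      (∃ M₀ : ℝ, ∀ x, |g x| ≤ M₀) →
      ∀ C : ℝ, 0 < C →
      (∀ a : ℝ, 0 < a → μ {x | |g x| < a} ≤ ENNReal.ofReal (C * a ^ δ)) →
      ∀ lam : ℝ, lam ≠ 0 →
        (∫⁻ x, ENNReal.ofReal
            (if g x = 0 then (1 : ℝ) else min 1 (|lam * g x| ^ (-ε))) ∂μ) ≤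
          ENNReal.ofReal (C * (|lam| ^ (-δ) +
            D * |lam| ^ (-ε) * (essSup (fun x => |g x|) μ) ^ (δ - ε))) := by
  refine ⟨δ / (δ - ε), div_pos (hε.trans hδε) (sub_pos.2 hδε),
    fun E _ μ g hg ⟨M₀, hM₀⟩ C hC hμ lam hlam => ?_⟩
  have hle_essSup : ∀ᵐ x ∂μ, ‖g x‖ ≤ essSup (fun x => |g x|) μ :=
    ae_le_essSup (isBoundedUnder_of ⟨M₀, hM₀⟩)
  refine (lintegral_mono fun x => ofReal_ite_min_one_abs_rpow_neg_le_enorm_rpow_neg hε lam _).trans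
    ((stmt9_general hε hδε hg.abs.aemeasurable hle_essSup hμ hlam).trans ?_)
  gcongr
  exact le_add_of_nonneg_left (by positivity)
end

section
/- Let p ≥ 1 be an integer. There exists a constant C_p > 0 with the following property. Let f be a real polynomial of degree l ≥ 1 and [a,b] a compact interval such that |f^{(p)}(x)| > 1 for all x ∈ [a,b]. Then for all λ ≠ 0, ∫_a^b min(1, |f''(x)| / (|λ| (f'(x))²)) dx + min( b − a, 1 / (|λ| sup_{x∈[a,b]} |f'(x)|) ) ≤ l·C_p·|λ|^{−1/p}. -/
open Set MeasureTheory Polynomial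

/-!
Put `g = f'` and `q = p - 1`, and let `δ > 0`. The roots of `g'` and of `g ± δ ^ q` cut `[a, b]`
into at most `3 * deg g + 1` intervals, on each of which `g'` has constant sign and `|g|` stays
on one side of `δ ^ q`. Where `|g| ≤ δ ^ q`, a van der Corput type estimate, obtained by iterating
the mean value theorem on thirds of the interval, bounds the length by `6 ^ q * δ`, and the
integrand is at most `1`. Where `|g| ≥ δ ^ q`, the integrand is at most `± (-1 / (|lam| * g))'`,
and the integral telescopes to at most `2 / (|lam| * δ ^ q)`. The second term is at most `b - a`
if `|g| ≤ δ ^ q` on all of `[a, b]`, and at most `1 / (|lam| * δ ^ q)` otherwise. The bounds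
balance when `|lam| * δ ^ (q + 1) = 1`.
-/

section Sublevel

variable {u v m : ℝ}

lemma mul_sub_lt_abs_add_abs_of_lt_abs_deriv {h : ℝ → ℝ} (huv : u < v)
    (hc : ContinuousOn h (Icc u v)) (hd : DifferentiableOn ℝ h (Ioo u v))
    (hm : ∀ x ∈ Ioo u v, m < |deriv h x|) : m * (v - u) < |h u| + |h v| := by
  obtain ⟨z, hz, hslope⟩ := exists_deriv_eq_slope h huv hc hd
  have hpos : 0 < v - u := sub_pos.2 huv
  have hmz := hm z hz
  rw [hslope, abs_div, abs_of_pos hpos, lt_div_iff₀ hpos] at hmz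
  linarith [abs_sub (h v) (h u)]

lemma lt_abs_on_third_of_lt_abs_deriv {h : ℝ → ℝ} (huv : u < v) (hm0 : 0 ≤ m)
    (hc : ContinuousOn h (Icc u v)) (hd : DifferentiableOn ℝ h (Ioo u v))
    (hm : ∀ x ∈ Ioo u v, m < |deriv h x|) :
    (∀ x ∈ Icc u (u + (v - u) / 3), m * (v - u) / 6 < |h x|) ∨
      ∀ x ∈ Icc (v - (v - u) / 3) v, m * (v - u) / 6 < |h x| := by
  by_contra! hsmall
  obtain ⟨⟨x, hx, hhx⟩, ⟨y, hy, hhy⟩⟩ := hsmall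
  have hgap : (v - u) / 3 ≤ y - x := by linarith [hx.2, hy.1]
  have hlt := mul_sub_lt_abs_add_abs_of_lt_abs_deriv (by linarith)
    (hc.mono (Icc_subset_Icc hx.1 hy.2)) (hd.mono (Ioo_subset_Ioo hx.1 hy.2))
    fun z hz => hm z (Ioo_subset_Ioo hx.1 hy.2 hz)
  linarith [mul_le_mul_of_nonneg_left hgap hm0]

lemma div_six_pow_pow_succ_le {d : ℝ} (hd : 0 ≤ d) (q : ℕ) :
    (d / 6 ^ (q + 1)) ^ (q + 1) ≤ (d / 3 / 6 ^ q) ^ q * (d / 6) := by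
  have hthird : d / 6 ^ (q + 1) ≤ d / 3 / 6 ^ q := by
    rw [div_div, pow_succ']
    gcongr
    norm_num
  have hsixth : d / 6 ^ (q + 1) ≤ d / 6 :=
    div_le_div_of_nonneg_left hd (by norm_num) (le_self_pow₀ (by norm_num) q.succ_ne_zero)
  rw [pow_succ]
  gcongr

lemma exists_lt_abs_of_lt_abs_iteratedDeriv {g : ℝ → ℝ} {q : ℕ} (hg : ContDiff ℝ q g)
    (huv : u < v) (hm0 : 0 ≤ m) (hm : ∀ x ∈ Icc u v, m < |iteratedDeriv q g x|) :
    ∃ x ∈ Icc u v, ((v - u) / 6 ^ q) ^ q * m < |g x| := by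
  induction q generalizing u v m with
  | zero => exact ⟨u, left_mem_Icc.2 huv.le, by simpa using hm u (left_mem_Icc.2 huv.le)⟩
  | succ q ih =>
    have hd : Differentiable ℝ (iteratedDeriv q g) := hg.differentiable_iteratedDeriv' q
    have hm6 : 0 ≤ m * (v - u) / 6 := by
      have := sub_pos.2 huv
      positivity
    have hpow : ((v - u) / 6 ^ (q + 1)) ^ (q + 1) * m
        ≤ ((v - u) / 3 / 6 ^ q) ^ q * (m * (v - u) / 6) :=
      calc _ ≤ ((v - u) / 3 / 6 ^ q) ^ q * ((v - u) / 6) * m :=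
            mul_le_mul_of_nonneg_right (div_six_pow_pow_succ_le (sub_pos.2 huv).le q) hm0
        _ = _ := by ring
    rcases lt_abs_on_third_of_lt_abs_deriv huv hm0 hd.continuous.continuousOn hd.differentiableOn
      fun x hx => iteratedDeriv_succ (f := g) ▸ hm x (Ioo_subset_Icc_self hx) with hthird | hthird
    all_goals
      obtain ⟨x, hx, hgx⟩ := ih hg.of_succ (by linarith) hm6 hthird
      refine ⟨x, ⟨by linarith [hx.1], by linarith [hx.2]⟩, hpow.trans_lt ?_⟩
      simpa only [add_sub_cancel_left, sub_sub_cancel] using hgx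

lemma sub_lt_of_abs_le_of_lt_abs_iteratedDeriv {g : ℝ → ℝ} {q : ℕ} {δ : ℝ}
    (hg : ContDiff ℝ q g) (hδ : 0 < δ) (hm0 : 0 ≤ m)
    (hm : ∀ x ∈ Icc u v, m < |iteratedDeriv q g x|) (hsmall : ∀ x ∈ Icc u v, |g x| ≤ δ ^ q * m) :
    v - u < 6 ^ q * δ := by
  rcases le_or_gt v u with hvu | huv
  · exact (sub_nonpos.2 hvu).trans_lt (by positivity)
  obtain ⟨x, hx, hlarge⟩ := exists_lt_abs_of_lt_abs_iteratedDeriv hg huv hm0 hm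
  have hpow : ((v - u) / 6 ^ q) ^ q < δ ^ q :=
    lt_of_mul_lt_mul_right (hlarge.trans_le (hsmall x hx)) hm0
  exact (div_lt_iff₀' (by positivity)).1 (lt_of_pow_lt_pow_left₀ q hδ.le hpow)

end Sublevel

lemma le_card_add_one_nsmul_of_subadditive {α M : Type*} [LinearOrder α] [AddCommGroup M]
    [PartialOrder M] [IsOrderedAddMonoid M] {Φ : α → α → M} {K : M}
    (hΦ : ∀ u v w, u ≤ v → v ≤ w → Φ u w ≤ Φ u v + Φ v w) (S : Finset α) {a b : α} (hab : a ≤ b)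
    (hK : ∀ u v, a ≤ u → u ≤ v → v ≤ b → Disjoint (Ioo u v) S → Φ u v ≤ K) :
    Φ a b ≤ (S.card + 1) • K := by
  induction S using Finset.induction_on_max generalizing b with
  | empty => simpa using hK a b le_rfl hab le_rfl (by simp)
  | insert s S hs ih =>
    have hcard : (insert s S).card = S.card + 1 :=
      Finset.card_insert_of_notMem fun h => (hs s h).false
    rw [hcard, succ_nsmul]
    by_cases hsab : s ∈ Ioo a b
    · refine (hΦ a s b hsab.1.le hsab.2.le).trans (add_le_add (ih hsab.1.le ?_) ?_)
      · refine fun u v hau huv hvs hdisj => hK u v hau huv (hvs.trans hsab.2.le) ?_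
        rw [Finset.coe_insert, disjoint_insert_right]
        exact ⟨fun h => (h.2.trans_le hvs).false, hdisj⟩
      · refine hK s b hsab.1.le hsab.2.le le_rfl (disjoint_left.2 fun x hx hxS => ?_)
        rcases Finset.mem_insert.1 hxS with rfl | hxS
        exacts [hx.1.false, hx.1.not_gt (hs x hxS)]
    · have hK0 : 0 ≤ K :=
        (le_add_iff_nonneg_left _).1 (hΦ a a a le_rfl le_rfl) |>.trans
          (hK a a le_rfl le_rfl hab (by simp))
      refine (ih hab fun u v hau huv hvb hdisj => hK u v hau huv hvb ?_).trans
        (le_add_of_nonneg_right hK0)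
      rw [Finset.coe_insert, disjoint_insert_right]
      exact ⟨fun h => hsab (Ioo_subset_Ioo hau hvb h), hdisj⟩

/-- The function `f` does not change sign on `s`; it may vanish there. -/
def HasConstantSignOn {α : Type*} (f : α → ℝ) (s : Set α) : Prop :=
  (∀ x ∈ s, 0 ≤ f x) ∨ ∀ x ∈ s, f x ≤ 0

lemma hasConstantSignOn_of_ne_zero {f : ℝ → ℝ} {u v : ℝ} (hf : ContinuousOn f (Icc u v))
    (hne : ∀ z ∈ Ioo u v, f z ≠ 0) : HasConstantSignOn f (Icc u v) := by
  by_contra hsign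
  simp only [HasConstantSignOn, not_or, not_forall, not_le] at hsign
  obtain ⟨⟨x, hx, hfx⟩, ⟨y, hy, hfy⟩⟩ := hsign
  rcases le_total x y with hxy | hyx
  · obtain ⟨z, hz, hfz⟩ := intermediate_value_Ioo hxy
      (hf.mono (Icc_subset_Icc hx.1 hy.2)) ⟨hfx, hfy⟩
    exact hne z (Ioo_subset_Ioo hx.1 hy.2 hz) hfz
  · obtain ⟨z, hz, hfz⟩ := intermediate_value_Ioo' hyx
      (hf.mono (Icc_subset_Icc hy.1 hx.2)) ⟨hfx, hfy⟩
    exact hne z (Ioo_subset_Ioo hy.1 hx.2 hz) hfz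

lemma hasConstantSignOn_of_disjoint_roots (P : ℝ[X]) {u v : ℝ}
    (h : Disjoint (Ioo u v) P.roots.toFinset) :
    HasConstantSignOn (fun x => P.eval x) (Icc u v) := by
  rcases eq_or_ne P 0 with rfl | hP
  · exact Or.inl fun x _ => eval_zero.ge
  · refine hasConstantSignOn_of_ne_zero P.continuous.continuousOn fun z hz hPz => ?_
    exact disjoint_left.1 h hz (Multiset.mem_toFinset.2 ((mem_roots hP).2 hPz))

lemma integral_abs_eq_abs_integral_of_hasConstantSignOn {μ : Measure ℝ} {f : ℝ → ℝ} {u v : ℝ}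
    (huv : u ≤ v) (hf : HasConstantSignOn f (Icc u v)) :
    ∫ x in u..v, |f x| ∂μ = |∫ x in u..v, f x ∂μ| := by
  rcases hf with hf | hf
  · rw [abs_of_nonneg (intervalIntegral.integral_nonneg huv hf)]
    refine intervalIntegral.integral_congr fun x hx => abs_of_nonneg (hf x ?_)
    rwa [← uIcc_of_le huv]
  · rw [← abs_neg, ← intervalIntegral.integral_neg,
      abs_of_nonneg (intervalIntegral.integral_nonneg huv fun x hx => neg_nonneg.2 (hf x hx))]
    refine intervalIntegral.integral_congr fun x hx => abs_of_nonpos (hf x ?_)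
    rwa [← uIcc_of_le huv]

section Integrand

/-- The number `min 1 (|z| / (L * y ^ 2))`, read as `1` when `y = 0`. With `y = f' x` and
`z = f'' x` it is the integrand of the theorem. -/
noncomputable def truncRatio (L y z : ℝ) : ℝ :=
  if y = 0 then 1 else min 1 (|z| / (L * y ^ 2))

variable {L : ℝ}

lemma truncRatio_le_one (L y z : ℝ) : truncRatio L y z ≤ 1 := by
  unfold truncRatio
  split_ifs
  exacts [le_rfl, min_le_left _ _]

lemma truncRatio_nonneg (hL : 0 ≤ L) (y z : ℝ) : 0 ≤ truncRatio L y z := by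
  unfold truncRatio
  split_ifs
  exacts [zero_le_one, le_min zero_le_one (by positivity)]

lemma truncRatio_le_inv_mul {y : ℝ} (hy : y ≠ 0) (L z : ℝ) :
    truncRatio L y z ≤ L⁻¹ * (|z| / y ^ 2) := by
  rw [truncRatio, if_neg hy]
  exact (min_le_right _ _).trans_eq (by ring)

lemma measurable_truncRatio {α : Type*} [MeasurableSpace α] {g g' : α → ℝ} (hg : Measurable g)
    (hg' : Measurable g') (L : ℝ) : Measurable fun x => truncRatio L (g x) (g' x) :=
  Measurable.ite (measurableSet_eq_fun hg measurable_const) measurable_const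
    (measurable_const.min (hg'.norm.div (measurable_const.mul (hg.pow_const 2))))

variable {g g' : ℝ → ℝ} {u v τ : ℝ}

lemma intervalIntegrable_truncRatio {μ : Measure ℝ} [IsLocallyFiniteMeasure μ] (hL : 0 ≤ L)
    (hg : Measurable g) (hg' : Measurable g') (u v : ℝ) :
    IntervalIntegrable (fun x => truncRatio L (g x) (g' x)) μ u v := by
  refine (intervalIntegrable_const (c := (1 : ℝ))).mono_fun
    (measurable_truncRatio hg hg' L).aestronglyMeasurable (.of_forall fun x => ?_)
  simpa only [Real.norm_of_nonneg (truncRatio_nonneg hL _ _), norm_one] using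
    truncRatio_le_one L (g x) (g' x)

lemma integral_truncRatio_le_sub (hL : 0 ≤ L) (huv : u ≤ v) (hg : Measurable g)
    (hg' : Measurable g') : ∫ x in u..v, truncRatio L (g x) (g' x) ≤ v - u := by
  simpa only [intervalIntegral.integral_const, smul_eq_mul, mul_one] using
    intervalIntegral.integral_mono_on huv
      (intervalIntegrable_truncRatio (μ := volume) hL hg hg' u v)
      (intervalIntegrable_const (c := (1 : ℝ))) fun x _ => truncRatio_le_one L (g x) (g' x)

lemma integral_deriv_div_sq (hg : ∀ x ∈ uIcc u v, HasDerivAt g (g' x) x)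
    (hg' : ContinuousOn g' (uIcc u v)) (hne : ∀ x ∈ uIcc u v, g x ≠ 0) :
    ∫ x in u..v, g' x / g x ^ 2 = (g u)⁻¹ - (g v)⁻¹ := by
  have hderiv : ∀ x ∈ uIcc u v, HasDerivAt (fun y => -(g y)⁻¹) (g' x / g x ^ 2) x := by
    intro x hx
    simpa only [neg_div, neg_neg] using ((hg x hx).fun_inv (hne x hx)).fun_neg
  have hcont : ContinuousOn (fun x => g' x / g x ^ 2) (uIcc u v) :=
    hg'.div ((HasDerivAt.continuousOn hg).pow 2) fun x hx => pow_ne_zero 2 (hne x hx)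
  rw [intervalIntegral.integral_eq_sub_of_hasDerivAt hderiv hcont.intervalIntegrable]
  ring

lemma integral_abs_deriv_div_sq_le (huv : u ≤ v) (hg : ∀ x ∈ Icc u v, HasDerivAt g (g' x) x)
    (hg' : ContinuousOn g' (Icc u v)) (hsign : HasConstantSignOn g' (Icc u v)) (hτ : 0 < τ)
    (hlarge : ∀ x ∈ Icc u v, τ ≤ |g x|) : ∫ x in u..v, |g' x| / g x ^ 2 ≤ 2 / τ := by
  have hne : ∀ x ∈ Icc u v, g x ≠ 0 := fun x hx => abs_pos.1 (hτ.trans_le (hlarge x hx))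
  have hinv : ∀ x ∈ Icc u v, |(g x)⁻¹| ≤ τ⁻¹ := fun x hx => by
    rw [abs_inv]
    exact inv_anti₀ hτ (hlarge x hx)
  have hsign' : HasConstantSignOn (fun x => g' x / g x ^ 2) (Icc u v) :=
    hsign.imp (fun h x hx => div_nonneg (h x hx) (sq_nonneg _))
      fun h x hx => div_nonpos_of_nonpos_of_nonneg (h x hx) (sq_nonneg _)
  calc ∫ x in u..v, |g' x| / g x ^ 2
      = ∫ x in u..v, |g' x / g x ^ 2| := by simp only [abs_div, abs_sq]
    _ = |(g u)⁻¹ - (g v)⁻¹| := by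
        rw [integral_abs_eq_abs_integral_of_hasConstantSignOn huv hsign', integral_deriv_div_sq]
        all_goals rwa [uIcc_of_le huv]
    _ ≤ |(g u)⁻¹| + |(g v)⁻¹| := abs_sub _ _
    _ ≤ τ⁻¹ + τ⁻¹ := add_le_add (hinv u (left_mem_Icc.2 huv)) (hinv v (right_mem_Icc.2 huv))
    _ = 2 / τ := by ring

lemma integral_truncRatio_le_of_le_abs (hL : 0 ≤ L) (huv : u ≤ v)
    (hg : ∀ x, HasDerivAt g (g' x) x) (hg' : Continuous g')
    (hsign : HasConstantSignOn g' (Icc u v)) (hτ : 0 < τ) (hlarge : ∀ x ∈ Icc u v, τ ≤ |g x|) :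
    ∫ x in u..v, truncRatio L (g x) (g' x) ≤ 2 / (L * τ) := by
  have hgc : Continuous g := continuous_iff_continuousAt.2 fun x => (hg x).continuousAt
  have hne : ∀ x ∈ Icc u v, g x ≠ 0 := fun x hx => abs_pos.1 (hτ.trans_le (hlarge x hx))
  have hcont : ContinuousOn (fun x => L⁻¹ * (|g' x| / g x ^ 2)) (Icc u v) :=
    continuousOn_const.mul (hg'.abs.continuousOn.div (hgc.pow 2).continuousOn
      fun x hx => pow_ne_zero 2 (hne x hx))
  calc ∫ x in u..v, truncRatio L (g x) (g' x)
      ≤ ∫ x in u..v, L⁻¹ * (|g' x| / g x ^ 2) :=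
        intervalIntegral.integral_mono_on huv
          (intervalIntegrable_truncRatio hL hgc.measurable hg'.measurable u v)
          (hcont.intervalIntegrable_of_Icc huv)
          fun x hx => truncRatio_le_inv_mul (hne x hx) L (g' x)
    _ = L⁻¹ * ∫ x in u..v, |g' x| / g x ^ 2 := intervalIntegral.integral_const_mul _ _
    _ ≤ L⁻¹ * (2 / τ) := mul_le_mul_of_nonneg_left
        (integral_abs_deriv_div_sq_le huv (fun x _ => hg x) hg'.continuousOn hsign hτ hlarge)
        (inv_nonneg.2 hL)
    _ = 2 / (L * τ) := by ring

end Integrand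

/-- The number `min c (1 / (L * M))`, read as `c` when `M = 0`. With `c = b - a` and `M` the
supremum of `|f'|` it is the second term of the theorem. -/
noncomputable def truncInv (c L M : ℝ) : ℝ :=
  if M = 0 then c else min c (1 / (L * M))

lemma truncInv_le_left (c L M : ℝ) : truncInv c L M ≤ c := by
  unfold truncInv
  split_ifs
  exacts [le_rfl, min_le_left _ _]

lemma truncInv_le_one_div {L M τ : ℝ} (hL : 0 < L) (hτ : 0 < τ) (hM : τ ≤ M) (c : ℝ) :
    truncInv c L M ≤ 1 / (L * τ) := by
  rw [truncInv, if_neg (hτ.trans_le hM).ne']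
  exact (min_le_right _ _).trans (by gcongr)

lemma truncInv_sSup_abs_le {g : ℝ → ℝ} {q : ℕ} {a b L δ : ℝ} (hg : ContDiff ℝ q g) (hL : 0 < L)
    (hδ : 0 < δ) (h : ∀ x ∈ Icc a b, 1 < |iteratedDeriv q g x|) :
    truncInv (b - a) L (sSup ((fun x => |g x|) '' Icc a b)) ≤ 6 ^ q * δ + 1 / (L * δ ^ q) := by
  by_cases hsmall : ∀ x ∈ Icc a b, |g x| ≤ δ ^ q * 1
  · calc _ ≤ b - a := truncInv_le_left _ _ _
      _ ≤ 6 ^ q * δ := (sub_lt_of_abs_le_of_lt_abs_iteratedDeriv hg hδ zero_le_one h hsmall).le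
      _ ≤ _ := le_add_of_nonneg_right (by positivity)
  · push Not at hsmall
    obtain ⟨x, hx, hgx⟩ := hsmall
    have hbdd : BddAbove ((fun x => |g x|) '' Icc a b) :=
      (isCompact_Icc.image hg.continuous.abs).bddAbove
    have hsup : δ ^ q ≤ sSup ((fun x => |g x|) '' Icc a b) :=
      (mul_one (δ ^ q)).ge.trans (hgx.le.trans (le_csSup hbdd (mem_image_of_mem _ hx)))
    exact (truncInv_le_one_div hL (by positivity) hsup _).trans
      (le_add_of_nonneg_left (by positivity))

section PolynomialIntegral

lemma contDiff_polynomial_eval {𝕜 : Type*} [NontriviallyNormedField 𝕜] (n : WithTop ℕ∞)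
    (P : 𝕜[X]) : ContDiff 𝕜 n fun x => P.eval x := by
  simpa only [coe_aeval_eq_eval] using P.contDiff_aeval (𝕜 := 𝕜) n

lemma iteratedDeriv_polynomial_eval {𝕜 : Type*} [NontriviallyNormedField 𝕜] (n : ℕ) (P : 𝕜[X]) :
    iteratedDeriv n (fun x => P.eval x) = fun x => (derivative^[n] P).eval x := by
  induction n with
  | zero => simp only [iteratedDeriv_zero, Function.iterate_zero, id_eq]
  | succ n ih =>
    funext x
    rw [iteratedDeriv_succ, ih, Polynomial.deriv, Function.iterate_succ_apply']

/-- The points at which `[a, b]` is cut: the zeros of `g'` and the points where `|g| = τ`, except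
that a polynomial among `g'`, `g - τ` and `g + τ` that vanishes identically contributes none. -/
noncomputable def breakpoints (g : ℝ[X]) (τ : ℝ) : Finset ℝ :=
  (derivative g).roots.toFinset ∪ ((g - C τ).roots.toFinset ∪ (g + C τ).roots.toFinset)

lemma card_breakpoints_le (g : ℝ[X]) (τ : ℝ) : (breakpoints g τ).card ≤ 3 * g.natDegree := by
  have hroots : ∀ P : ℝ[X], P.natDegree ≤ g.natDegree → P.roots.toFinset.card ≤ g.natDegree :=
    fun P hP => (Multiset.toFinset_card_le _).trans ((card_roots' P).trans hP)
  have hcard : (breakpoints g τ).card ≤ g.natDegree + (g.natDegree + g.natDegree) := by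
    refine (Finset.card_union_le _ _).trans (add_le_add (hroots _ ?_)
      ((Finset.card_union_le _ _).trans (add_le_add (hroots _ ?_) (hroots _ ?_))))
    exacts [(natDegree_derivative_le g).trans (Nat.sub_le _ _), natDegree_sub_C.le,
      natDegree_add_C.le]
  omega

variable {g : ℝ[X]} {u v τ : ℝ}

lemma hasConstantSignOn_derivative_of_disjoint_breakpoints
    (h : Disjoint (Ioo u v) (breakpoints g τ)) :
    HasConstantSignOn (fun x => (derivative g).eval x) (Icc u v) :=
  hasConstantSignOn_of_disjoint_roots _
    (h.mono_right (Finset.coe_subset.2 Finset.subset_union_left))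

lemma abs_le_or_le_abs_of_disjoint_breakpoints (h : Disjoint (Ioo u v) (breakpoints g τ)) :
    (∀ x ∈ Icc u v, |g.eval x| ≤ τ) ∨ ∀ x ∈ Icc u v, τ ≤ |g.eval x| := by
  have hroots : (g - C τ).roots.toFinset ∪ (g + C τ).roots.toFinset ⊆ breakpoints g τ :=
    Finset.subset_union_right
  have hsub := hasConstantSignOn_of_disjoint_roots (g - C τ)
    (h.mono_right (Finset.coe_subset.2 (Finset.subset_union_left.trans hroots)))
  have hadd := hasConstantSignOn_of_disjoint_roots (g + C τ)
    (h.mono_right (Finset.coe_subset.2 (Finset.subset_union_right.trans hroots)))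
  simp only [HasConstantSignOn, eval_sub, eval_add, eval_C] at hsub hadd
  rcases hsub with habove | hbelow
  · exact Or.inr fun x hx => le_abs.2 (Or.inl (sub_nonneg.1 (habove x hx)))
  rcases hadd with habove' | hbelow'
  · exact Or.inl fun x hx => abs_le.2
      ⟨neg_le_iff_add_nonneg.2 (habove' x hx), sub_nonpos.1 (hbelow x hx)⟩
  · exact Or.inr fun x hx => le_abs.2 (Or.inr (by linarith [hbelow' x hx]))

lemma integral_truncRatio_le_of_disjoint_breakpoints {q : ℕ} {L δ : ℝ} (hL : 0 ≤ L) (hδ : 0 < δ)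
    (huv : u ≤ v) (h : ∀ x ∈ Icc u v, 1 < |(derivative^[q] g).eval x|)
    (hdisj : Disjoint (Ioo u v) (breakpoints g (δ ^ q))) :
    ∫ x in u..v, truncRatio L (g.eval x) ((derivative g).eval x) ≤
      6 ^ q * δ + 2 / (L * δ ^ q) := by
  rcases abs_le_or_le_abs_of_disjoint_breakpoints hdisj with hsmall | hlarge
  · calc _ ≤ v - u := integral_truncRatio_le_sub hL huv g.continuous.measurable
          (derivative g).continuous.measurable
      _ ≤ 6 ^ q * δ := by
          refine (sub_lt_of_abs_le_of_lt_abs_iteratedDeriv (contDiff_polynomial_eval q g)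
            hδ zero_le_one ?_ ?_).le
          · simpa only [iteratedDeriv_polynomial_eval] using h
          · simpa only [mul_one] using hsmall
      _ ≤ _ := le_add_of_nonneg_right (by positivity)
  · calc _ ≤ 2 / (L * δ ^ q) :=
          integral_truncRatio_le_of_le_abs hL huv g.hasDerivAt (derivative g).continuous
            (hasConstantSignOn_derivative_of_disjoint_breakpoints hdisj) (by positivity) hlarge
      _ ≤ _ := le_add_of_nonneg_left (by positivity)

lemma integral_truncRatio_polynomial_le {q : ℕ} {a b L δ : ℝ} (hL : 0 ≤ L) (hδ : 0 < δ)
    (hab : a ≤ b) (h : ∀ x ∈ Icc a b, 1 < |(derivative^[q] g).eval x|) :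
    ∫ x in a..b, truncRatio L (g.eval x) ((derivative g).eval x) ≤
      (3 * g.natDegree + 1) * (6 ^ q * δ + 2 / (L * δ ^ q)) := by
  have hint := intervalIntegrable_truncRatio (μ := volume) hL g.continuous.measurable
    (derivative g).continuous.measurable
  calc ∫ x in a..b, truncRatio L (g.eval x) ((derivative g).eval x)
      ≤ ((breakpoints g (δ ^ q)).card + 1) • (6 ^ q * δ + 2 / (L * δ ^ q)) :=
        le_card_add_one_nsmul_of_subadditive
          (fun u v w _ _ =>
            (intervalIntegral.integral_add_adjacent_intervals (hint u v) (hint v w)).ge)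
          _ hab fun u v hau huv hvb hdisj =>
            integral_truncRatio_le_of_disjoint_breakpoints hL hδ huv
              (fun x hx => h x (Icc_subset_Icc hau hvb hx)) hdisj
    _ ≤ (3 * g.natDegree + 1) • (6 ^ q * δ + 2 / (L * δ ^ q)) :=
        nsmul_le_nsmul_left (by positivity) (Nat.succ_le_succ (card_breakpoints_le g _))
    _ = _ := by simp [mul_add]

end PolynomialIntegral

lemma mul_rpow_neg_one_div_pow_eq_one {L : ℝ} (hL : 0 < L) {p : ℕ} (hp : p ≠ 0) :
    L * (L ^ (-(1 : ℝ) / p)) ^ p = 1 := by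
  rw [← Real.rpow_mul_natCast hL.le, div_mul_cancel₀ _ (Nat.cast_ne_zero.2 hp),
    Real.rpow_neg_one, mul_inv_cancel₀ hL.ne']

/-- **Theorem 4.1.** For each integer `p ≥ 1` there is a constant `C_p > 0` such that: if `f`
is a real polynomial of degree `l ≥ 1` and `[a,b]` is a compact interval with `|f⁽ᵖ⁾(x)| > 1`
on `[a,b]`, then for all `λ ≠ 0`,
`∫_a^b min(1, |f''|/(|λ|(f')²)) + min(b-a, 1/(|λ| sup_{[a,b]}|f'|)) ≤ l·C_p·|λ|^{-1/p}`.
Here `|f''(x)|/(|λ|(f'(x))²)` is interpreted as `+∞` (so the min is `1`) where `f'(x) = 0`,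
and `1/(|λ| sup|f'|)` as `+∞` (so the min is `b - a`) if `f'` vanishes identically on
`[a,b]`. -/
theorem stmt12 (p : ℕ) (hp : 1 ≤ p) :
    ∃ Cp : ℝ, 0 < Cp ∧
      ∀ (f : Polynomial ℝ) (l : ℕ), f.natDegree = l → 1 ≤ l →
      ∀ (a b : ℝ), a ≤ b →
      (∀ x ∈ Icc a b, 1 < |((derivative^[p]) f).eval x|) →
      ∀ lam : ℝ, lam ≠ 0 →
        (∫ x in a..b,
            if (derivative f).eval x = 0 then (1 : ℝ)
            else min 1 (|(derivative (derivative f)).eval x| /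
              (|lam| * ((derivative f).eval x) ^ 2))) +
          (if sSup ((fun x => |(derivative f).eval x|) '' Icc a b) = 0 then b - a
           else min (b - a)
             (1 / (|lam| * sSup ((fun x => |(derivative f).eval x|) '' Icc a b)))) ≤
        (l : ℝ) * Cp * |lam| ^ (-(1 : ℝ) / (p : ℝ)) := by
  obtain ⟨q, rfl⟩ : ∃ q, p = q + 1 := ⟨p - 1, by omega⟩
  refine ⟨3 * (6 ^ q + 2), by positivity, fun f l hfl hl a b hab h lam hlam => ?_⟩
  have hL : 0 < |lam| := abs_pos.2 hlam
  set δ : ℝ := |lam| ^ (-(1 : ℝ) / ((q + 1 : ℕ) : ℝ))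
  have hδ : 0 < δ := Real.rpow_pos_of_pos hL _
  have hbalance : 1 / (|lam| * δ ^ q) = δ := by
    rw [div_eq_iff (by positivity), mul_left_comm, ← pow_succ']
    exact (mul_rpow_neg_one_div_pow_eq_one hL q.succ_ne_zero).symm
  have hintegral := integral_truncRatio_polynomial_le (g := derivative f) hL.le hδ hab h
  have hboundary := truncInv_sSup_abs_le (contDiff_polynomial_eval q (derivative f)) hL hδ
    (by simpa only [iteratedDeriv_polynomial_eval, ← Function.iterate_succ_apply] using h)
  have hdegree : (derivative f).natDegree + 1 ≤ l := by
    have := natDegree_derivative_le f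
    omega
  have hdegree' : ((derivative f).natDegree : ℝ) + 1 ≤ l := mod_cast hdegree
  calc _ ≤ _ := add_le_add hintegral hboundary
    _ ≤ (3 * (derivative f).natDegree + 2) * ((6 ^ q + 2) * δ) := by
        rw [← mul_one_div 2, hbalance]
        linarith
    _ ≤ 3 * l * ((6 ^ q + 2) * δ) := by gcongr; linarith
    _ = _ := by ring
end

section
/- Let f be a C² real-valued function on a compact interval [c,d] such that f' is nonvanishing on [c,d], |f''(x)|/(f'(x))² < 1 for all x ∈ (c,d), and sup_{x∈[c,d]} |f'(x)| > 2·inf_{x∈[c,d]} |f'(x)|. Then for every y ∈ [c,d], 1/|f'(y)| < 3 ∫_c^d |f''(x)| / (f'(x))² dx. -/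
open Set MeasureTheory

/-!
The derivative of `1 / f'` is `-f'' / (f')²`, so `1 / f'` varies by at most
`I = ∫ |f''| / (f')²` over `[c, d]`. If `|f'|` has minimum `m` at `a` and maximum `M > K m` at `b`,
then comparing `a` with `b` gives `I ≥ 1 / m - 1 / M > (1 - 1 / K) / m`, and `1 / |f'| ≤ 1 / m`
everywhere. For `K = 2` this is the claim, even with `2` in place of `3`.
-/

lemma inv_lt_div_sub_one_mul_inv_sub_inv {K m M : ℝ} (hK : 1 < K) (hm : 0 < m) (hM : K * m < M) :
    m⁻¹ < K / (K - 1) * (m⁻¹ - M⁻¹) := by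
  have hMinv : M⁻¹ < (K * m)⁻¹ := inv_strictAnti₀ (by positivity) hM
  have : 0 < K - 1 := sub_pos.2 hK
  calc m⁻¹ = K / (K - 1) * (m⁻¹ - (K * m)⁻¹) := by field_simp
    _ < K / (K - 1) * (m⁻¹ - M⁻¹) := by gcongr

lemma hasDerivAt_iteratedDerivWithin {𝕜 F : Type*} [NontriviallyNormedField 𝕜]
    [NormedAddCommGroup F] [NormedSpace 𝕜 F] {n : ℕ} {f : 𝕜 → F} {s : Set 𝕜} {x : 𝕜}
    (hf : ContDiffOn 𝕜 (n + 1) f s) (hs : UniqueDiffOn 𝕜 s) (hx : s ∈ nhds x) :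
    HasDerivAt (iteratedDerivWithin n f s) (iteratedDerivWithin (n + 1) f s x) x := by
  rw [iteratedDerivWithin_succ]
  exact (hf.differentiableOn_iteratedDerivWithin (mod_cast n.lt_succ_self) hs x
    (mem_of_mem_nhds hx)).hasDerivWithinAt.hasDerivAt hx

section InverseVariation

variable {𝕜 : Type*} [RCLike 𝕜] {g g' : ℝ → 𝕜} {a b c d : ℝ}

lemma intervalIntegrable_div_sq (hg : ContinuousOn g (uIcc a b)) (hne : ∀ x ∈ uIcc a b, g x ≠ 0)
    (hg' : IntervalIntegrable g' volume a b) :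
    IntervalIntegrable (fun x => g' x / g x ^ 2) volume a b := by
  simpa only [div_eq_mul_inv] using
    hg'.mul_continuousOn ((hg.fun_pow 2).fun_inv₀ fun x hx => pow_ne_zero 2 (hne x hx))

lemma norm_inv_sub_inv_le_abs_integral (hg : ContinuousOn g (uIcc a b))
    (hne : ∀ x ∈ uIcc a b, g x ≠ 0)
    (hder : ∀ x ∈ Ioo (min a b) (max a b), HasDerivAt g (g' x) x)
    (hg' : IntervalIntegrable g' volume a b) :
    ‖(g b)⁻¹ - (g a)⁻¹‖ ≤ |∫ x in a..b, ‖g' x‖ / ‖g x‖ ^ 2| := by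
  have hftc : ∫ x in a..b, -g' x / g x ^ 2 = (g b)⁻¹ - (g a)⁻¹ :=
    intervalIntegral.integral_eq_sub_of_hasDeriv_right (hg.inv₀ hne)
      (fun x hx => ((hder x hx).fun_inv (hne x (Ioo_subset_Icc_self hx))).hasDerivWithinAt)
      (intervalIntegrable_div_sq hg hne hg'.neg)
  rw [← hftc]
  refine intervalIntegral.norm_integral_le_abs_integral_norm.trans_eq ?_
  simp only [norm_div, norm_neg, norm_pow]

lemma norm_inv_sub_inv_le_integral (hg : ContinuousOn g (Icc c d)) (hne : ∀ x ∈ Icc c d, g x ≠ 0)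
    (hder : ∀ x ∈ Ioo c d, HasDerivAt g (g' x) x) (hg' : IntervalIntegrable g' volume c d)
    (ha : a ∈ Icc c d) (hb : b ∈ Icc c d) :
    ‖(g b)⁻¹ - (g a)⁻¹‖ ≤ ∫ x in c..d, ‖g' x‖ / ‖g x‖ ^ 2 := by
  have hcd : c ≤ d := ha.1.trans ha.2
  have hsub : uIcc a b ⊆ Icc c d := uIcc_subset_Icc ha hb
  have hsub_uIcc : uIcc a b ⊆ uIcc c d := by rwa [uIcc_of_le hcd]
  have hint : IntervalIntegrable (fun x => ‖g' x‖ / ‖g x‖ ^ 2) volume c d := by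
    rw [← uIcc_of_le hcd] at hg hne
    simpa only [norm_div, norm_pow] using (intervalIntegrable_div_sq hg hne hg').norm
  calc ‖(g b)⁻¹ - (g a)⁻¹‖
      ≤ |∫ x in a..b, ‖g' x‖ / ‖g x‖ ^ 2| :=
        norm_inv_sub_inv_le_abs_integral (hg.mono hsub) (fun x hx => hne x (hsub hx))
          (fun x hx => hder x (Ioo_subset_Ioo (le_min ha.1 hb.1) (max_le ha.2 hb.2) hx))
          (hg'.mono_set hsub_uIcc)
    _ ≤ |∫ x in c..d, ‖g' x‖ / ‖g x‖ ^ 2| :=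
        intervalIntegral.abs_integral_mono_interval (uIoc_subset_uIoc_of_uIcc_subset_uIcc hsub_uIcc)
          (.of_forall fun x => by positivity) hint
    _ = ∫ x in c..d, ‖g' x‖ / ‖g x‖ ^ 2 :=
        abs_of_nonneg (intervalIntegral.integral_nonneg hcd fun x _ => by positivity)

lemma inv_norm_lt_mul_integral_of_mul_norm_lt {K : ℝ} (hK : 1 < K)
    (hg : ContinuousOn g (Icc c d)) (hne : ∀ x ∈ Icc c d, g x ≠ 0)
    (hder : ∀ x ∈ Ioo c d, HasDerivAt g (g' x) x) (hg' : IntervalIntegrable g' volume c d)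
    (ha : a ∈ Icc c d) (hb : b ∈ Icc c d) (hab : K * ‖g a‖ < ‖g b‖) :
    ‖g a‖⁻¹ < K / (K - 1) * ∫ x in c..d, ‖g' x‖ / ‖g x‖ ^ 2 := by
  have hvar : ‖g a‖⁻¹ - ‖g b‖⁻¹ ≤ ∫ x in c..d, ‖g' x‖ / ‖g x‖ ^ 2 := by
    simp only [← norm_inv]
    exact (norm_sub_norm_le _ _).trans (norm_inv_sub_inv_le_integral hg hne hder hg' hb ha)
  have : 0 < K - 1 := sub_pos.2 hK
  calc ‖g a‖⁻¹ < K / (K - 1) * (‖g a‖⁻¹ - ‖g b‖⁻¹) :=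
        inv_lt_div_sub_one_mul_inv_sub_inv hK (norm_pos_iff.2 (hne a ha)) hab
    _ ≤ K / (K - 1) * ∫ x in c..d, ‖g' x‖ / ‖g x‖ ^ 2 := by gcongr

lemma inv_norm_lt_mul_integral_of_mul_sInf_lt_sSup {K : ℝ} (hK : 1 < K)
    (hg : ContinuousOn g (Icc c d)) (hne : ∀ x ∈ Icc c d, g x ≠ 0)
    (hder : ∀ x ∈ Ioo c d, HasDerivAt g (g' x) x) (hg' : IntervalIntegrable g' volume c d)
    (hsup : K * sInf ((‖g ·‖) '' Icc c d) < sSup ((‖g ·‖) '' Icc c d)) {y : ℝ}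
    (hy : y ∈ Icc c d) :
    ‖g y‖⁻¹ < K / (K - 1) * ∫ x in c..d, ‖g' x‖ / ‖g x‖ ^ 2 := by
  obtain ⟨a, ha, hinf, hmin⟩ := isCompact_Icc.exists_sInf_image_eq_and_le ⟨y, hy⟩ hg.norm
  obtain ⟨b, hb, hmax⟩ := isCompact_Icc.exists_sSup_image_eq ⟨y, hy⟩ hg.norm
  rw [hinf, hmax] at hsup
  calc ‖g y‖⁻¹ ≤ ‖g a‖⁻¹ := inv_anti₀ (norm_pos_iff.2 (hne a ha)) (hmin y hy)
    _ < K / (K - 1) * ∫ x in c..d, ‖g' x‖ / ‖g x‖ ^ 2 :=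
      inv_norm_lt_mul_integral_of_mul_norm_lt hK hg hne hder hg' ha hb hsup

end InverseVariation

theorem stmt13_general {𝕜 : Type*} [RCLike 𝕜] {f : ℝ → 𝕜} {c d K : ℝ} (hK : 1 < K)
    (hf : ContDiffOn ℝ 2 f (Icc c d))
    (hf' : ∀ x ∈ Icc c d, iteratedDerivWithin 1 f (Icc c d) x ≠ 0)
    (hsup : K * sInf ((fun x => ‖iteratedDerivWithin 1 f (Icc c d) x‖) '' Icc c d) <
      sSup ((fun x => ‖iteratedDerivWithin 1 f (Icc c d) x‖) '' Icc c d))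
    {y : ℝ} (hy : y ∈ Icc c d) :
    1 / ‖iteratedDerivWithin 1 f (Icc c d) y‖ <
      K / (K - 1) * ∫ x in c..d,
        ‖iteratedDerivWithin 2 f (Icc c d) x‖ / ‖iteratedDerivWithin 1 f (Icc c d) x‖ ^ 2 := by
  have hcd : c < d := by
    refine (hy.1.trans hy.2).lt_of_ne ?_
    rintro rfl
    simp only [Icc_self, image_singleton, csInf_singleton, csSup_singleton] at hsup
    exact hsup.not_ge (le_mul_of_one_le_left (norm_nonneg _) hK.le)
  have hu : UniqueDiffOn ℝ (Icc c d) := uniqueDiffOn_Icc hcd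
  have hcont₁ : ContinuousOn (iteratedDerivWithin 1 f (Icc c d)) (Icc c d) :=
    hf.continuousOn_iteratedDerivWithin one_le_two hu
  have hcont₂ : ContinuousOn (iteratedDerivWithin 2 f (Icc c d)) (Icc c d) :=
    hf.continuousOn_iteratedDerivWithin le_rfl hu
  rw [one_div]
  exact inv_norm_lt_mul_integral_of_mul_sInf_lt_sSup hK hcont₁ hf'
    (fun x hx => hasDerivAt_iteratedDerivWithin (by simpa [one_add_one_eq_two] using hf) hu
      (Icc_mem_nhds hx.1 hx.2))
    (hcont₂.intervalIntegrable_of_Icc hcd.le) hsup hy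

/-- **Lemma 5.1.** Let `f` be `C²` on a compact interval `[c,d]` with `f'` nonvanishing on
`[c,d]`, `|f''(x)|/(f'(x))² < 1` on `(c,d)`, and `sup_{[c,d]}|f'| > 2·inf_{[c,d]}|f'|`
(a "type 1" interval). Then every `y ∈ [c,d]` satisfies
`1/|f'(y)| < 3 ∫_c^d |f''(x)|/(f'(x))² dx`. -/
theorem stmt13 (c d : ℝ) (hcd : c ≤ d) (f : ℝ → ℝ)
    (hf : ContDiffOn ℝ 2 f (Icc c d))
    (hf' : ∀ x ∈ Icc c d, iteratedDerivWithin 1 f (Icc c d) x ≠ 0)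
    (hratio : ∀ x ∈ Ioo c d,
      |iteratedDerivWithin 2 f (Icc c d) x| / (iteratedDerivWithin 1 f (Icc c d) x) ^ 2 < 1)
    (htype1 : sSup ((fun x => |iteratedDerivWithin 1 f (Icc c d) x|) '' Icc c d) >
      2 * sInf ((fun x => |iteratedDerivWithin 1 f (Icc c d) x|) '' Icc c d)) :
    ∀ y ∈ Icc c d,
      1 / |iteratedDerivWithin 1 f (Icc c d) y| <
        3 * ∫ x in c..d,
          |iteratedDerivWithin 2 f (Icc c d) x| / (iteratedDerivWithin 1 f (Icc c d) x) ^ 2 := by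
  intro y hy
  have h := stmt13_general one_lt_two hf hf' htype1 hy
  simp only [Real.norm_eq_abs, sq_abs] at h
  linarith [one_div_nonneg.2 (abs_nonneg (iteratedDerivWithin 1 f (Icc c d) y))]
end

section
/- Let f be a C² real-valued function on a compact interval [c,d] with c < d, such that f'(x) ≠ 0 for all x ∈ (c,d) and |f''(x)|/(f'(x))² < 1 for all x ∈ (c,d). Then f'(c) ≠ 0 and f'(d) ≠ 0. -/
open Set

/-!
Since `f'` is bounded on `[c, d]`, a quadratic bound `‖f''‖ ≤ K ‖f'‖²` on `(c, d)` gives a linear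
one `‖f''‖ ≤ L ‖f'‖`. Grönwall's inequality along segments then yields
`‖f' x‖ ≤ ‖f' y‖ exp (L |x - y|)` for all `x`, `y` in `(c, d)`, hence in `[c, d]` by continuity, so
a single zero of `f'` in `[c, d]` forces `f'` to vanish identically.
-/

section Gronwall

variable {E F : Type*} [NormedAddCommGroup E] [NormedSpace ℝ E]
  [NormedAddCommGroup F] [NormedSpace ℝ F] {g : F → E} {g' : F → F →L[ℝ] E} {s : Set F} {K : ℝ}

theorem norm_le_norm_mul_exp_of_norm_hasFDerivWithinAt_le (hs : Convex ℝ s)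
    (hg : ∀ x ∈ s, HasFDerivWithinAt g (g' x) s x) (hbound : ∀ x ∈ s, ‖g' x‖ ≤ K * ‖g x‖)
    {x y : F} (hx : x ∈ s) (hy : y ∈ s) :
    ‖g x‖ ≤ ‖g y‖ * Real.exp (K * ‖x - y‖) := by
  let γ : ℝ → F := AffineMap.lineMap y x
  have hγ : MapsTo γ (Icc 0 1) s := hs.mapsTo_lineMap hy hx
  have hderiv : ∀ t ∈ Icc (0 : ℝ) 1,
      HasDerivWithinAt (g ∘ γ) (g' (γ t) (x - y)) (Icc 0 1) t := fun t ht =>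
    (hg _ (hγ ht)).comp_hasDerivWithinAt t AffineMap.hasDerivWithinAt_lineMap hγ
  have hderiv_le : ∀ t ∈ Icc (0 : ℝ) 1,
      ‖g' (γ t) (x - y)‖ ≤ K * ‖x - y‖ * ‖(g ∘ γ) t‖ + 0 := fun t ht =>
    calc ‖g' (γ t) (x - y)‖ ≤ ‖g' (γ t)‖ * ‖x - y‖ := (g' (γ t)).le_opNorm _
      _ ≤ K * ‖g (γ t)‖ * ‖x - y‖ := by gcongr; exact hbound _ (hγ ht)
      _ = K * ‖x - y‖ * ‖(g ∘ γ) t‖ + 0 := by rw [Function.comp_apply]; ring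
  have hgronwall := norm_le_gronwallBound_of_norm_deriv_right_le
    (HasDerivWithinAt.continuousOn hderiv)
    (fun t ht => (hderiv t (Ico_subset_Icc_self ht)).mono_of_mem_nhdsWithin
      (Icc_mem_nhdsGE_of_mem ht))
    le_rfl (fun t ht => hderiv_le t (Ico_subset_Icc_self ht)) 1 (right_mem_Icc.2 zero_le_one)
  simpa [γ, gronwallBound_ε0] using hgronwall

theorem norm_le_norm_mul_exp_of_norm_hasFDerivWithinAt_le_of_mem_closure (hs : Convex ℝ s)
    (hcont : ContinuousOn g (closure s)) (hg : ∀ x ∈ s, HasFDerivWithinAt g (g' x) s x)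
    (hbound : ∀ x ∈ s, ‖g' x‖ ≤ K * ‖g x‖) {x y : F} (hx : x ∈ closure s) (hy : y ∈ closure s) :
    ‖g x‖ ≤ ‖g y‖ * Real.exp (K * ‖x - y‖) := by
  have hx_of_mem : ∀ z ∈ s, ‖g x‖ ≤ ‖g z‖ * Real.exp (K * ‖x - z‖) := fun z hz =>
    le_on_closure
      (fun w hw => norm_le_norm_mul_exp_of_norm_hasFDerivWithinAt_le hs hg hbound hw hz)
      (by fun_prop) (by fun_prop) hx
  exact le_on_closure hx_of_mem (by fun_prop) (by fun_prop) hy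

theorem ne_zero_of_norm_hasFDerivWithinAt_le (hs : Convex ℝ s)
    (hcont : ContinuousOn g (closure s)) (hg : ∀ x ∈ s, HasFDerivWithinAt g (g' x) s x)
    (hbound : ∀ x ∈ s, ‖g' x‖ ≤ K * ‖g x‖) {x y : F} (hx : x ∈ closure s) (hy : y ∈ closure s)
    (hgx : g x ≠ 0) : g y ≠ 0 := by
  intro hgy
  have hle := norm_le_norm_mul_exp_of_norm_hasFDerivWithinAt_le_of_mem_closure
    hs hcont hg hbound hx hy
  rw [hgy, norm_zero, zero_mul] at hle
  exact hgx (norm_le_zero_iff.1 hle)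

theorem ne_zero_of_norm_hasFDerivWithinAt_le_sq (hs : Convex ℝ s) (hcpt : IsCompact (closure s))
    (hcont : ContinuousOn g (closure s)) (hg : ∀ x ∈ s, HasFDerivWithinAt g (g' x) s x)
    (hbound : ∀ x ∈ s, ‖g' x‖ ≤ K * ‖g x‖ ^ 2) {x y : F} (hx : x ∈ closure s)
    (hy : y ∈ closure s) (hgx : g x ≠ 0) : g y ≠ 0 := by
  obtain ⟨M, hM⟩ := hcpt.exists_bound_of_continuousOn hcont
  have hbound_linear : ∀ z ∈ s, ‖g' z‖ ≤ |K| * M * ‖g z‖ := fun z hz =>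
    calc ‖g' z‖ ≤ K * ‖g z‖ ^ 2 := hbound z hz
      _ ≤ |K| * ‖g z‖ ^ 2 := by gcongr; exact le_abs_self K
      _ = |K| * ‖g z‖ * ‖g z‖ := by ring
      _ ≤ |K| * M * ‖g z‖ := by gcongr; exact hM z (subset_closure hz)
  exact ne_zero_of_norm_hasFDerivWithinAt_le hs hcont hg hbound_linear hx hy hgx

end Gronwall

theorem hasDerivAt_iteratedDerivWithin_Icc {E : Type*} [NormedAddCommGroup E] [NormedSpace ℝ E]
    {f : ℝ → E} {c d x : ℝ} {n : ℕ} (hx : x ∈ Ioo c d)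
    (hf : DifferentiableAt ℝ (iteratedDerivWithin n f (Icc c d)) x) :
    HasDerivAt (iteratedDerivWithin n f (Icc c d)) (iteratedDerivWithin (n + 1) f (Icc c d) x)
      x := by
  rw [iteratedDerivWithin_succ, derivWithin_of_mem_nhds (Icc_mem_nhds hx.1 hx.2)]
  exact hf.hasDerivAt

theorem stmt14_general {E : Type*} [NormedAddCommGroup E] [NormedSpace ℝ E] {f : ℝ → E}
    {c d K : ℝ} (hcd : c < d) (hf : ContDiffOn ℝ 1 f (Icc c d))
    (hdiff : DifferentiableOn ℝ (iteratedDerivWithin 1 f (Icc c d)) (Ioo c d))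
    (hbound : ∀ x ∈ Ioo c d, ‖iteratedDerivWithin 2 f (Icc c d) x‖ ≤
      K * ‖iteratedDerivWithin 1 f (Icc c d) x‖ ^ 2)
    (hne : ∃ x ∈ Icc c d, iteratedDerivWithin 1 f (Icc c d) x ≠ 0) :
    ∀ x ∈ Icc c d, iteratedDerivWithin 1 f (Icc c d) x ≠ 0 := by
  obtain ⟨m, hm, hfm⟩ := hne
  have hcont : ContinuousOn (iteratedDerivWithin 1 f (Icc c d)) (Icc c d) :=
    hf.continuousOn_iteratedDerivWithin le_rfl (uniqueDiffOn_Icc hcd)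
  have hderiv : ∀ x ∈ Ioo c d, HasDerivAt (iteratedDerivWithin 1 f (Icc c d))
      (iteratedDerivWithin 2 f (Icc c d) x) x := fun x hx =>
    hasDerivAt_iteratedDerivWithin_Icc hx (hdiff.differentiableAt (Ioo_mem_nhds hx.1 hx.2))
  have hclosure : closure (Ioo c d) = Icc c d := closure_Ioo hcd.ne
  rw [← hclosure] at hm
  intro x hx
  rw [← hclosure] at hx
  exact ne_zero_of_norm_hasFDerivWithinAt_le_sq (convex_Ioo c d)
    (hclosure ▸ isCompact_Icc) (by rwa [hclosure])
    (fun y hy => (hderiv y hy).hasDerivWithinAt.hasFDerivWithinAt)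
    (by simpa only [ContinuousLinearMap.norm_toSpanSingleton] using hbound) hm hx hfm

/-- Let `f` be `C²` on a compact interval `[c,d]`, `c < d`, with `f'(x) ≠ 0` and
`|f''(x)|/(f'(x))² < 1` for all `x` in the open interval `(c,d)`. Then `f'(c) ≠ 0` and
`f'(d) ≠ 0` (derivatives at the endpoints are the one-sided derivatives). -/
theorem stmt14 (c d : ℝ) (hcd : c < d) (f : ℝ → ℝ)
    (hf : ContDiffOn ℝ 2 f (Icc c d))
    (hf' : ∀ x ∈ Ioo c d, iteratedDerivWithin 1 f (Icc c d) x ≠ 0)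
    (hratio : ∀ x ∈ Ioo c d,
      |iteratedDerivWithin 2 f (Icc c d) x| / (iteratedDerivWithin 1 f (Icc c d) x) ^ 2 < 1) :
    iteratedDerivWithin 1 f (Icc c d) c ≠ 0 ∧ iteratedDerivWithin 1 f (Icc c d) d ≠ 0 := by
  obtain ⟨m, hm⟩ := nonempty_Ioo.2 hcd
  have hdiff := hf.differentiableOn_iteratedDerivWithin (m := 1) (by norm_num)
    (uniqueDiffOn_Icc hcd)
  have hne := stmt14_general (K := 1) hcd (hf.of_le one_le_two) (hdiff.mono Ioo_subset_Icc_self)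
    (fun x hx => by
      simpa only [Real.norm_eq_abs, sq_abs] using
        (div_le_iff₀ (sq_pos_of_ne_zero (hf' x hx))).1 (hratio x hx).le)
    ⟨m, Ioo_subset_Icc_self hm, hf' m hm⟩
  exact ⟨hne c (left_mem_Icc.2 hcd.le), hne d (right_mem_Icc.2 hcd.le)⟩
end

section
/- Let f be a C² real-valued function on a compact interval [c,d] such that f' is nonvanishing on [c,d], |f''(x)|/(f'(x))² < 1 for all x ∈ (c,d), and sup_{x∈[c,d]} |f'(x)| > 2·inf_{x∈[c,d]} |f'(x)|. Let φ : [c,d] → ℂ be C¹. Then |∫_c^d e^{i f(x)} φ(x) dx| ≤ (7‖φ‖_{L^∞} + 3‖φ'‖_{L^1}) ∫_c^d min(1, |f''(x)| / (f'(x))²) dx. -/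
open Set MeasureTheory

/-!
Write `J = ∫ |f''| / (f')²`. Since `|(1 / f')'| = |f''| / (f')²`, the reciprocal `1 / f'`
oscillates by at most `J`. If `max |f'| ≥ r min |f'|` for some `r > 1`, the oscillation is at least
`(1 - 1 / r) / min |f'|`, so `1 / |f'| ≤ r / (r - 1) * J` everywhere. Integrating
`e^{if} φ = f' e^{if} • (φ / f')` by parts costs at most `2 ‖φ‖_∞ sup |1 / f'|` at the endpoints,
and `‖φ'‖_1 sup |1 / f'| + ‖φ‖_∞ J` from the derivative of `φ / f'`. The constants `7` and `3` are
what comes out for `r = 3 / 2`; the hypothesis `|f''| < (f')²` turns `J` into the integral of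
`min 1 (|f''| / (f')²)`.
-/

section Quotient

variable {𝕜 E : Type*} [NormedField 𝕜] [NormedAddCommGroup E] [NormedSpace 𝕜 E] {c d : ℝ}
  {g g' : ℝ → 𝕜} (hcd : c ≤ d) (hg : ContinuousOn g (Icc c d))
  (hg' : IntervalIntegrable g' volume c d) (hg0 : ∀ t ∈ Icc c d, g t ≠ 0)

include hcd hg hg' hg0

lemma intervalIntegrable_div_sq_s15 :
    IntervalIntegrable (fun t => g' t / g t ^ 2) volume c d := by
  rw [← uIcc_of_le hcd] at hg hg0
  simpa only [div_eq_mul_inv] using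
    hg'.mul_continuousOn ((hg.fun_pow 2).fun_inv₀ fun t ht => pow_ne_zero 2 (hg0 t ht))

lemma integral_norm_inv_smul_add_smul_le {φ φ' : ℝ → E} {S A : ℝ}
    (hφ' : IntervalIntegrable φ' volume c d) (hS : ∀ t ∈ Icc c d, ‖φ t‖ ≤ S)
    (hA : ∀ t ∈ Icc c d, ‖g t‖⁻¹ ≤ A) :
    ∫ t in c..d, ‖(g t)⁻¹ • φ' t + (-g' t / g t ^ 2) • φ t‖ ≤
      A * (∫ t in c..d, ‖φ' t‖) + S * ∫ t in c..d, ‖g' t‖ / ‖g t‖ ^ 2 := by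
  have hquot : IntervalIntegrable (fun t => ‖g' t‖ / ‖g t‖ ^ 2) volume c d := by
    simpa only [norm_div, norm_pow] using (intervalIntegrable_div_sq_s15 hcd hg hg' hg0).norm
  have hbound : ∀ t ∈ Icc c d, ‖(g t)⁻¹ • φ' t + (-g' t / g t ^ 2) • φ t‖ ≤
      A * ‖φ' t‖ + S * (‖g' t‖ / ‖g t‖ ^ 2) := fun t ht =>
    calc ‖(g t)⁻¹ • φ' t + (-g' t / g t ^ 2) • φ t‖
        ≤ ‖g t‖⁻¹ * ‖φ' t‖ + ‖φ t‖ * (‖g' t‖ / ‖g t‖ ^ 2) := by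
          refine (norm_add_le _ _).trans_eq ?_
          simp only [norm_smul, norm_inv, norm_div, norm_neg, norm_pow, mul_comm ‖φ t‖]
      _ ≤ A * ‖φ' t‖ + S * (‖g' t‖ / ‖g t‖ ^ 2) := by
          gcongr
          exacts [hA t ht, hS t ht]
  rw [← intervalIntegral.integral_const_mul, ← intervalIntegral.integral_const_mul,
    ← intervalIntegral.integral_add (hφ'.norm.const_mul A) (hquot.const_mul S)]
  refine (Real.le_norm_self _).trans (intervalIntegral.norm_integral_le_of_norm_le hcd
    (.of_forall fun t ht => ?_) ((hφ'.norm.const_mul A).add (hquot.const_mul S)))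
  rw [norm_norm]
  exact hbound t (Ioc_subset_Icc_self ht)

end Quotient

section OscillationOfReciprocal

variable {𝕜 E : Type*} [NontriviallyNormedField 𝕜] [NormedAlgebra ℝ 𝕜]
  [NormedAddCommGroup E] [NormedSpace ℝ E] {c d x y : ℝ}

lemma norm_sub_le_integral_norm_of_hasDerivWithinAt {u u' : ℝ → E}
    (hu : ∀ t ∈ Icc c d, HasDerivWithinAt u (u' t) (Icc c d) t)
    (hu' : IntervalIntegrable u' volume c d) (hx : x ∈ Icc c d) (hy : y ∈ Icc c d) :
    ‖u y - u x‖ ≤ ∫ t in c..d, ‖u' t‖ := by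
  wlog hxy : x ≤ y generalizing x y
  · rw [norm_sub_rev]
    exact this hy hx (le_of_not_ge hxy)
  have hderiv : ∀ t ∈ Ioo x y, HasDerivAt u (u' t) t := fun t ht =>
    (hu t ⟨hx.1.trans ht.1.le, ht.2.le.trans hy.2⟩).hasDerivAt
      (Icc_mem_nhds (hx.1.trans_lt ht.1) (ht.2.trans_le hy.2))
  have hcont : ContinuousOn u (Icc c d) := fun t ht => (hu t ht).continuousWithinAt
  have hsub : uIcc x y ⊆ uIcc c d := by
    rw [uIcc_of_le hxy, uIcc_of_le (hx.1.trans hx.2)]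
    exact Icc_subset_Icc hx.1 hy.2
  calc ‖u y - u x‖ ≤ ∫ t in x..y, ‖u' t‖ :=
        norm_sub_le_integral_of_norm_deriv_le_of_le hxy (hcont.mono (Icc_subset_Icc hx.1 hy.2))
          (fun t ht => (hderiv t ht).differentiableAt.differentiableWithinAt)
          (.of_forall fun t ht => (congrArg norm (hderiv t ht).deriv).le) (hu'.mono_set hsub).norm
    _ ≤ ∫ t in c..d, ‖u' t‖ :=
        intervalIntegral.integral_mono_interval hx.1 hxy hy.2
          (.of_forall fun _ => norm_nonneg _) hu'.norm

variable {g g' : ℝ → 𝕜} (hg : ∀ t ∈ Icc c d, HasDerivWithinAt g (g' t) (Icc c d) t)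
  (hg' : IntervalIntegrable g' volume c d) (hg0 : ∀ t ∈ Icc c d, g t ≠ 0)

include hg hg' hg0

lemma norm_inv_sub_inv_le_integral_s15 (hx : x ∈ Icc c d) (hy : y ∈ Icc c d) :
    ‖(g y)⁻¹ - (g x)⁻¹‖ ≤ ∫ t in c..d, ‖g' t‖ / ‖g t‖ ^ 2 := by
  have hcont : ContinuousOn g (Icc c d) := fun t ht => (hg t ht).continuousWithinAt
  have hint : IntervalIntegrable (fun t => -g' t / g t ^ 2) volume c d :=
    intervalIntegrable_div_sq_s15 (hx.1.trans hx.2) hcont hg'.neg hg0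
  simpa only [norm_div, norm_neg, norm_pow] using norm_sub_le_integral_norm_of_hasDerivWithinAt
    (fun t ht => (hg t ht).fun_inv (hg0 t ht)) hint hx hy

lemma inv_norm_le_integral_of_mul_norm_le {r : ℝ} (hr : 1 < r) (hx : x ∈ Icc c d)
    (hy : y ∈ Icc c d) (hxy : r * ‖g x‖ ≤ ‖g y‖) :
    ‖g x‖⁻¹ ≤ r / (r - 1) * ∫ t in c..d, ‖g' t‖ / ‖g t‖ ^ 2 := by
  have hr0 : 0 < r := one_pos.trans hr
  have hx0 : 0 < ‖g x‖ := norm_pos_iff.2 (hg0 x hx)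
  have hosc : ‖g x‖⁻¹ - ‖g y‖⁻¹ ≤ ∫ t in c..d, ‖g' t‖ / ‖g t‖ ^ 2 := by
    simpa only [norm_inv] using
      (norm_sub_norm_le _ _).trans (norm_inv_sub_inv_le_integral_s15 hg hg' hg0 hy hx)
  have hinv : ‖g y‖⁻¹ ≤ r⁻¹ * ‖g x‖⁻¹ := by
    rw [← mul_inv]
    exact inv_anti₀ (mul_pos hr0 hx0) hxy
  calc ‖g x‖⁻¹ = r / (r - 1) * (‖g x‖⁻¹ - r⁻¹ * ‖g x‖⁻¹) := by
        field_simp [(sub_pos.2 hr).ne']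
    _ ≤ r / (r - 1) * ∫ t in c..d, ‖g' t‖ / ‖g t‖ ^ 2 :=
        mul_le_mul_of_nonneg_left (by linarith) (div_nonneg hr0.le (sub_pos.2 hr).le)

lemma inv_norm_le_integral_of_mul_sInf_le_sSup {r : ℝ} (hr : 1 < r)
    (hsup : r * sInf ((fun t => ‖g t‖) '' Icc c d) ≤ sSup ((fun t => ‖g t‖) '' Icc c d))
    (hx : x ∈ Icc c d) :
    ‖g x‖⁻¹ ≤ r / (r - 1) * ∫ t in c..d, ‖g' t‖ / ‖g t‖ ^ 2 := by
  have hcont : ContinuousOn (fun t => ‖g t‖) (Icc c d) := fun t ht =>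
    (hg t ht).continuousWithinAt.norm
  obtain ⟨m, hm, hm_eq, hm_le⟩ := isCompact_Icc.exists_sInf_image_eq_and_le ⟨x, hx⟩ hcont
  obtain ⟨M, hM, hM_eq, -⟩ := isCompact_Icc.exists_sSup_image_eq_and_ge ⟨x, hx⟩ hcont
  rw [hm_eq, hM_eq] at hsup
  exact (inv_anti₀ (norm_pos_iff.2 (hg0 m hm)) (hm_le x hx)).trans
    (inv_norm_le_integral_of_mul_norm_le hg hg' hg0 hr hm hM hsup)

end OscillationOfReciprocal

lemma norm_integral_deriv_smul_le {𝕜 E : Type*} [NontriviallyNormedField 𝕜] [NormedAlgebra ℝ 𝕜]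
    [NormedAddCommGroup E] [NormedSpace ℝ E] [NormedSpace 𝕜 E] [IsScalarTower ℝ 𝕜 E]
    [CompleteSpace E] {c d : ℝ} (hcd : c ≤ d) {u u' : ℝ → 𝕜} {w w' : ℝ → E} {C : ℝ}
    (hu : ∀ t ∈ Icc c d, HasDerivWithinAt u (u' t) (Icc c d) t)
    (hw : ∀ t ∈ Icc c d, HasDerivWithinAt w (w' t) (Icc c d) t)
    (hu' : IntervalIntegrable u' volume c d) (hw' : IntervalIntegrable w' volume c d)
    (hC : ∀ t ∈ Icc c d, ‖u t‖ ≤ C) :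
    ‖∫ t in c..d, u' t • w t‖ ≤ C * (‖w c‖ + ‖w d‖ + ∫ t in c..d, ‖w' t‖) := by
  have hparts : ∫ t in c..d, u' t • w t = u d • w d - u c • w c - ∫ t in c..d, u t • w' t := by
    rw [← uIcc_of_le hcd] at hu hw
    rw [eq_sub_iff_add_eq', ← eq_sub_iff_add_eq]
    exact intervalIntegral.integral_smul_deriv_eq_deriv_smul_of_hasDerivWithinAt hu hw hu' hw'
  have hsmul : ∀ t ∈ Icc c d, ∀ v : E, ‖u t • v‖ ≤ C * ‖v‖ := fun t ht v =>
    (norm_smul_le _ _).trans (mul_le_mul_of_nonneg_right (hC t ht) (norm_nonneg v))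
  have hrest : ‖∫ t in c..d, u t • w' t‖ ≤ C * ∫ t in c..d, ‖w' t‖ := by
    rw [← intervalIntegral.integral_const_mul]
    exact intervalIntegral.norm_integral_le_of_norm_le hcd
      (.of_forall fun t ht => hsmul t (Ioc_subset_Icc_self ht) (w' t)) (hw'.norm.const_mul C)
  calc ‖∫ t in c..d, u' t • w t‖
      ≤ ‖u d • w d‖ + ‖u c • w c‖ + ‖∫ t in c..d, u t • w' t‖ := by
        rw [hparts]
        exact (norm_sub_le _ _).trans (add_le_add_left (norm_sub_le _ _) _)
    _ ≤ C * ‖w d‖ + C * ‖w c‖ + C * ∫ t in c..d, ‖w' t‖ :=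
        add_le_add_three (hsmul d (right_mem_Icc.2 hcd) _) (hsmul c (left_mem_Icc.2 hcd) _) hrest
    _ = C * (‖w c‖ + ‖w d‖ + ∫ t in c..d, ‖w' t‖) := by ring

section OscillatoryIntegral

variable {E : Type*} [NormedAddCommGroup E] [NormedSpace ℂ E] [CompleteSpace E] {c d : ℝ}

lemma norm_integral_cexp_smul_deriv_smul_le (hcd : c ≤ d) {f f' : ℝ → ℝ} {w w' : ℝ → E}
    (hf : ∀ t ∈ Icc c d, HasDerivWithinAt f (f' t) (Icc c d) t)
    (hw : ∀ t ∈ Icc c d, HasDerivWithinAt w (w' t) (Icc c d) t)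
    (hf' : IntervalIntegrable f' volume c d) (hw' : IntervalIntegrable w' volume c d) :
    ‖∫ t in c..d, Complex.exp (Complex.I * (f t : ℂ)) • f' t • w t‖ ≤
      ‖w c‖ + ‖w d‖ + ∫ t in c..d, ‖w' t‖ := by
  have hexp : ContinuousOn (fun t => Complex.exp (Complex.I * (f t : ℂ))) (uIcc c d) := by
    have hcont : ContinuousOn f (uIcc c d) := by
      rw [uIcc_of_le hcd]
      exact fun t ht => (hf t ht).continuousWithinAt
    fun_prop
  have hf'_ofReal : IntervalIntegrable (fun t => (f' t : ℂ)) volume c d :=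
    ⟨hf'.1.ofReal, hf'.2.ofReal⟩
  have hprim : ∀ t ∈ Icc c d, HasDerivWithinAt
      (fun t => -Complex.I * Complex.exp (Complex.I * (f t : ℂ)))
      (Complex.exp (Complex.I * (f t : ℂ)) * (f' t : ℂ)) (Icc c d) t := fun t ht => by
    refine (((hf t ht).ofReal_comp.const_mul Complex.I).cexp.const_mul (-Complex.I)).congr_deriv ?_
    linear_combination (-Complex.exp (Complex.I * (f t : ℂ)) * (f' t : ℂ)) * Complex.I_sq
  have hnorm : ∀ t ∈ Icc c d, ‖-Complex.I * Complex.exp (Complex.I * (f t : ℂ))‖ ≤ 1 :=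
    fun t _ => by
    rw [norm_mul, norm_neg, Complex.norm_I, Complex.norm_exp_I_mul_ofReal, one_mul]
  simpa only [mul_smul, Complex.coe_smul, one_mul] using
    norm_integral_deriv_smul_le hcd hprim hw (hf'_ofReal.continuousOn_mul hexp) hw' hnorm

lemma norm_integral_cexp_smul_le (hcd : c ≤ d) {f f' f'' : ℝ → ℝ} {φ φ' : ℝ → E} {S A : ℝ}
    (hf : ∀ t ∈ Icc c d, HasDerivWithinAt f (f' t) (Icc c d) t)
    (hf' : ∀ t ∈ Icc c d, HasDerivWithinAt f' (f'' t) (Icc c d) t)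
    (hφ : ∀ t ∈ Icc c d, HasDerivWithinAt φ (φ' t) (Icc c d) t)
    (hf'' : IntervalIntegrable f'' volume c d) (hφ' : IntervalIntegrable φ' volume c d)
    (hf0 : ∀ t ∈ Icc c d, f' t ≠ 0) (hS : ∀ t ∈ Icc c d, ‖φ t‖ ≤ S)
    (hA : ∀ t ∈ Icc c d, |f' t|⁻¹ ≤ A) :
    ‖∫ t in c..d, Complex.exp (Complex.I * (f t : ℂ)) • φ t‖ ≤
      2 * (S * A) + A * (∫ t in c..d, ‖φ' t‖) + S * ∫ t in c..d, |f'' t| / f' t ^ 2 := by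
  have hf'_cont : ContinuousOn f' (Icc c d) := fun t ht => (hf' t ht).continuousWithinAt
  have hw : ∀ t ∈ Icc c d, HasDerivWithinAt (fun t => (f' t)⁻¹ • φ t)
      ((f' t)⁻¹ • φ' t + (-f'' t / f' t ^ 2) • φ t) (Icc c d) t := fun t ht =>
    ((hf' t ht).fun_inv (hf0 t ht)).fun_smul (hφ t ht)
  have hw' : IntervalIntegrable (fun t => (f' t)⁻¹ • φ' t + (-f'' t / f' t ^ 2) • φ t)
      volume c d := by
    have hquot : IntervalIntegrable (fun t => -f'' t / f' t ^ 2) volume c d :=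
      intervalIntegrable_div_sq_s15 hcd hf'_cont hf''.neg hf0
    have hinv : ContinuousOn (fun t => (f' t)⁻¹) (uIcc c d) := by
      rw [uIcc_of_le hcd]
      exact hf'_cont.inv₀ hf0
    have hφ_cont : ContinuousOn φ (uIcc c d) := by
      rw [uIcc_of_le hcd]
      exact fun t ht => (hφ t ht).continuousWithinAt
    exact (hφ'.continuousOn_smul hinv).add (hquot.smul_continuousOn hφ_cont)
  have hboundary : ∀ t ∈ Icc c d, ‖(f' t)⁻¹ • φ t‖ ≤ S * A := fun t ht => by
    rw [norm_smul, norm_inv, mul_comm]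
    exact mul_le_mul (hS t ht) (hA t ht) (by positivity) ((norm_nonneg _).trans (hS t ht))
  have hrest : ∫ t in c..d, ‖(f' t)⁻¹ • φ' t + (-f'' t / f' t ^ 2) • φ t‖ ≤
      A * (∫ t in c..d, ‖φ' t‖) + S * ∫ t in c..d, |f'' t| / f' t ^ 2 := by
    simpa only [Real.norm_eq_abs, sq_abs] using
      integral_norm_inv_smul_add_smul_le hcd hf'_cont hf'' hf0 hφ' hS hA
  calc ‖∫ t in c..d, Complex.exp (Complex.I * (f t : ℂ)) • φ t‖
      = ‖∫ t in c..d, Complex.exp (Complex.I * (f t : ℂ)) • f' t • (f' t)⁻¹ • φ t‖ := by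
        congr 1
        refine intervalIntegral.integral_congr fun t ht => ?_
        rw [uIcc_of_le hcd] at ht
        simp only [smul_inv_smul₀ (hf0 t ht)]
    _ ≤ ‖(f' c)⁻¹ • φ c‖ + ‖(f' d)⁻¹ • φ d‖ +
          ∫ t in c..d, ‖(f' t)⁻¹ • φ' t + (-f'' t / f' t ^ 2) • φ t‖ :=
        norm_integral_cexp_smul_deriv_smul_le hcd hf hw
          (hf'_cont.intervalIntegrable_of_Icc hcd) hw'
    _ ≤ 2 * (S * A) + A * (∫ t in c..d, ‖φ' t‖) + S * ∫ t in c..d, |f'' t| / f' t ^ 2 := by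
        linarith [hboundary c (left_mem_Icc.2 hcd), hboundary d (right_mem_Icc.2 hcd)]

end OscillatoryIntegral

lemma hasDerivWithinAt_iteratedDerivWithin {𝕜 F : Type*} [NontriviallyNormedField 𝕜]
    [NormedAddCommGroup F] [NormedSpace 𝕜 F] {f : 𝕜 → F} {s : Set 𝕜} {n : WithTop ℕ∞} {m : ℕ}
    {x : 𝕜} (hf : ContDiffOn 𝕜 n f s) (hmn : m < n) (hs : UniqueDiffOn 𝕜 s) (hx : x ∈ s) :
    HasDerivWithinAt (iteratedDerivWithin m f s) (iteratedDerivWithin (m + 1) f s x) s x := by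
  rw [iteratedDerivWithin_succ]
  exact (hf.differentiableOn_iteratedDerivWithin hmn hs x hx).hasDerivWithinAt

theorem stmt15_general {E : Type*} [NormedAddCommGroup E] [NormedSpace ℂ E] [CompleteSpace E]
    (c d : ℝ) (hcd : c ≤ d) (f : ℝ → ℝ) (hf : ContDiffOn ℝ 2 f (Icc c d))
    (hf' : ∀ x ∈ Icc c d, iteratedDerivWithin 1 f (Icc c d) x ≠ 0) (r : ℝ) (hr : 1 < r)
    (hsup : r * sInf ((fun x => |iteratedDerivWithin 1 f (Icc c d) x|) '' Icc c d) ≤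
      sSup ((fun x => |iteratedDerivWithin 1 f (Icc c d) x|) '' Icc c d))
    (φ : ℝ → E) (hφ : ContDiffOn ℝ 1 φ (Icc c d)) :
    ‖∫ x in c..d, Complex.exp (Complex.I * (f x : ℂ)) • φ x‖ ≤
      ((2 * (r / (r - 1)) + 1) * sSup ((fun x => ‖φ x‖) '' Icc c d) +
        r / (r - 1) * ∫ x in c..d, ‖derivWithin φ (Icc c d) x‖) *
      ∫ x in c..d,
        |iteratedDerivWithin 2 f (Icc c d) x| / (iteratedDerivWithin 1 f (Icc c d) x) ^ 2 := by
  rcases hcd.eq_or_lt with rfl | hlt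
  · simp
  have hU : UniqueDiffOn ℝ (Icc c d) := uniqueDiffOn_Icc hlt
  have hderiv : ∀ t ∈ Icc c d, HasDerivWithinAt f (iteratedDerivWithin 1 f (Icc c d) t)
      (Icc c d) t := fun t ht => by
    simpa only [iteratedDerivWithin_zero] using
      hasDerivWithinAt_iteratedDerivWithin (m := 0) hf (by norm_num) hU ht
  have hderiv2 : ∀ t ∈ Icc c d, HasDerivWithinAt (iteratedDerivWithin 1 f (Icc c d))
      (iteratedDerivWithin 2 f (Icc c d) t) (Icc c d) t := fun t ht =>
    hasDerivWithinAt_iteratedDerivWithin (m := 1) hf (by norm_num) hU ht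
  have hint2 : IntervalIntegrable (iteratedDerivWithin 2 f (Icc c d)) volume c d :=
    (hf.continuousOn_iteratedDerivWithin le_rfl hU).intervalIntegrable_of_Icc hcd
  have hφ' : IntervalIntegrable (derivWithin φ (Icc c d)) volume c d :=
    (hφ.continuousOn_derivWithin hU le_rfl).intervalIntegrable_of_Icc hcd
  have hinv := fun t ht =>
    inv_norm_le_integral_of_mul_sInf_le_sSup hderiv2 hint2 hf' hr hsup (x := t) ht
  simp only [Real.norm_eq_abs, sq_abs] at hinv
  refine (norm_integral_cexp_smul_le hcd hderiv hderiv2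
    (fun t ht => (hφ.differentiableOn one_ne_zero t ht).hasDerivWithinAt) hint2 hφ' hf'
    (fun t ht => le_csSup (isCompact_Icc.bddAbove_image hφ.continuousOn.norm)
      (mem_image_of_mem _ ht)) hinv).trans_eq ?_
  ring

/-- **Estimate (5.12') for type 1 intervals.** Let `f` be `C²` on a compact interval `[c,d]`
with `f'` nonvanishing on `[c,d]`, `|f''(x)|/(f'(x))² < 1` on `(c,d)`, and
`sup_{[c,d]}|f'| > 2·inf_{[c,d]}|f'|`. Let `φ : [c,d] → ℂ` be `C¹`. Then
`|∫_c^d e^{i f} φ| ≤ (7‖φ‖_∞ + 3‖φ'‖_{L¹}) ∫_c^d min(1, |f''|/(f')²)`. -/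
theorem stmt15 (c d : ℝ) (hcd : c ≤ d) (f : ℝ → ℝ)
    (hf : ContDiffOn ℝ 2 f (Icc c d))
    (hf' : ∀ x ∈ Icc c d, iteratedDerivWithin 1 f (Icc c d) x ≠ 0)
    (hratio : ∀ x ∈ Ioo c d,
      |iteratedDerivWithin 2 f (Icc c d) x| / (iteratedDerivWithin 1 f (Icc c d) x) ^ 2 < 1)
    (htype1 : sSup ((fun x => |iteratedDerivWithin 1 f (Icc c d) x|) '' Icc c d) >
      2 * sInf ((fun x => |iteratedDerivWithin 1 f (Icc c d) x|) '' Icc c d))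
    (φ : ℝ → ℂ) (hφ : ContDiffOn ℝ 1 φ (Icc c d)) :
    ‖∫ x in c..d, Complex.exp (Complex.I * (f x : ℂ)) * φ x‖ ≤
      (7 * sSup ((fun x => ‖φ x‖) '' Icc c d) +
        3 * ∫ x in c..d, ‖derivWithin φ (Icc c d) x‖) *
      ∫ x in c..d, min 1
        (|iteratedDerivWithin 2 f (Icc c d) x| / (iteratedDerivWithin 1 f (Icc c d) x) ^ 2) := by
  rw [intervalIntegral.integral_congr_Ioo_of_le hcd fun x hx => min_eq_right (hratio x hx).le]
  have hsup := (mul_le_mul_of_nonneg_right (by norm_num : (3 / 2 : ℝ) ≤ 2)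
    (Real.sInf_nonneg (forall_mem_image.2 fun _ _ => abs_nonneg _))).trans htype1.le
  convert! stmt15_general c d hcd f hf hf' (3 / 2) (by norm_num) hsup φ hφ using 3 <;> norm_num
end

section
/- Let p ≥ 2 be an integer. There exists a constant d_p > 0 with the following property. Let [a,b] be a compact interval, let g be a C^{p−1} real-valued function on [a,b] with |g^{(p−1)}(x)| > 1 for all x ∈ [a,b], and let r ∈ ℝ. Then for every ε > 0, the Lebesgue measure of {x ∈ [a,b] : |(x − r)·g(x)| < ε} is at most d_p · ε^{1/p}. -/
open Set MeasureTheory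

/-!
Write `p = n + 1`, let `l` be a lower bound for `|g⁽ⁿ⁾|` and let `t = (ε / l) ^ (1 / (n + 1))`, so
that `ε = l * t ^ (n + 1)`. Outside the window `|x - r| < t` the inequality `|(x - r) * g x| < ε`
forces `|g x| < l * t ^ n`, so the estimate reduces to van der Corput's: if `|g⁽ⁿ⁾| ≥ l > 0` on an
interval, then `{|g| < l * t ^ n}` has measure at most `2 * (2 ^ n - 1) * t`. Adding the length
`2 * t` of the window gives the constant `2 ^ p`.

Van der Corput's estimate goes by induction: if `|g⁽ⁿ⁺¹⁾| ≥ l`, then `g⁽ⁿ⁾` is monotone or antitone,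
so `{g⁽ⁿ⁾ ≥ l * t}` and `{g⁽ⁿ⁾ ≤ -(l * t)}` are intervals, on which the induction hypothesis applies
with `l * t` in place of `l` and with the same `t`. What remains, `{|g⁽ⁿ⁾| < l * t}`, has length at
most `2 * t` because `g⁽ⁿ⁾` expands distances by the factor `l`.
-/

section Derivative

variable {S : Set ℝ} {f f' : ℝ → ℝ} {l t : ℝ}

lemma mul_dist_le_dist_of_le_abs_deriv (hS : Convex ℝ S)
    (hf : ∀ x ∈ S, HasDerivWithinAt f (f' x) S x) (hf' : ∀ x ∈ S, l ≤ |f' x|)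
    {x y : ℝ} (hx : x ∈ S) (hy : y ∈ S) : l * dist x y ≤ dist (f x) (f y) := by
  wlog hxy : x < y generalizing x y
  · rcases (not_lt.1 hxy).eq_or_lt with rfl | hyx
    · simp
    · simpa only [dist_comm] using this hy hx hyx
  have hsub : Icc x y ⊆ S := hS.ordConnected.out hx hy
  obtain ⟨c, hc, hslope⟩ := exists_hasDerivAt_eq_slope f f' hxy
    (fun z hz => ((hf z (hsub hz)).mono hsub).continuousWithinAt)
    (fun z hz => (hf z (hsub (Ioo_subset_Icc_self hz))).hasDerivAt
      (Filter.mem_of_superset (Icc_mem_nhds hz.1 hz.2) hsub))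
  have hpos : 0 < y - x := sub_pos.2 hxy
  calc l * dist x y = l * (y - x) := by rw [dist_comm, Real.dist_eq, abs_of_pos hpos]
    _ ≤ |f' c| * (y - x) := by gcongr; exact hf' c (hsub (Ioo_subset_Icc_self hc))
    _ = dist (f x) (f y) := by
      rw [hslope, abs_div, abs_of_pos hpos, div_mul_cancel₀ _ hpos.ne', dist_comm, Real.dist_eq]

lemma quasilinearOn_of_hasDerivWithinAt_ne_zero (hS : Convex ℝ S)
    (hf : ∀ x ∈ S, HasDerivWithinAt f (f' x) S x) (hf' : ∀ x ∈ S, f' x ≠ 0) :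
    QuasilinearOn ℝ S f := by
  have hcont : ContinuousOn f S := fun x hx => (hf x hx).continuousWithinAt
  have hint : ∀ x ∈ interior S, HasDerivWithinAt f (f' x) (interior S) x := fun x hx =>
    (hf x (interior_subset hx)).mono interior_subset
  rcases hasDerivWithinAt_forall_lt_or_forall_gt_of_forall_ne hS hf hf' with hneg | hpos
  · exact (antitoneOn_of_hasDerivWithinAt_nonpos hS hcont hint
      fun x hx => (hneg x (interior_subset hx)).le).quasilinearOn hS
  · exact (monotoneOn_of_hasDerivWithinAt_nonneg hS hcont hint
      fun x hx => (hpos x (interior_subset hx)).le).quasilinearOn hS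

lemma volume_abs_lt_le_of_mul_dist_le_dist (hl : 0 < l)
    (hf : ∀ x ∈ S, ∀ y ∈ S, l * dist x y ≤ dist (f x) (f y)) :
    volume {x ∈ S | |f x| < l * t} ≤ ENNReal.ofReal (2 * t) := by
  refine (Real.volume_le_diam _).trans (Metric.ediam_le ?_)
  rintro x ⟨hx, hfx⟩ y ⟨hy, hfy⟩
  rw [edist_dist]
  refine ENNReal.ofReal_le_ofReal (le_of_mul_le_mul_left ?_ hl)
  calc l * dist x y ≤ |f x - f y| := hf x hx y hy
    _ ≤ |f x| + |f y| := abs_sub _ _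
    _ ≤ l * (2 * t) := by linarith

end Derivative

lemma measure_sep_le_of_quasilinearOn {E : Type*} [AddCommMonoid E] [Module ℝ E]
    [MeasurableSpace E] {μ : Measure E} {S : Set E} {h : E → ℝ} (hh : QuasilinearOn ℝ S h)
    (P : E → Prop) {η : ℝ} {A : ENNReal}
    (hA : ∀ T ⊆ S, Convex ℝ T → (∀ x ∈ T, η ≤ |h x|) → μ {x ∈ T | P x} ≤ A) :
    μ {x ∈ S | P x} ≤ A + A + μ {x ∈ S | |h x| < η} := by
  have hge : μ {x ∈ {x ∈ S | η ≤ h x} | P x} ≤ A :=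
    hA _ (sep_subset _ _) (hh.2 η) fun x hx => hx.2.trans (le_abs_self _)
  have hle : μ {x ∈ {x ∈ S | h x ≤ -η} | P x} ≤ A :=
    hA _ (sep_subset _ _) (hh.1 (-η)) fun x hx => (le_neg_of_le_neg hx.2).trans (neg_le_abs _)
  have hcover : {x ∈ S | P x} ⊆ {x ∈ {x ∈ S | η ≤ h x} | P x} ∪
      {x ∈ {x ∈ S | h x ≤ -η} | P x} ∪ {x ∈ S | |h x| < η} := by
    rintro x ⟨hx, hPx⟩
    rcases lt_or_ge |h x| η with hlt | hη
    · exact Or.inr ⟨hx, hlt⟩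
    · rcases le_abs.1 hη with hη | hη
      · exact Or.inl (Or.inl ⟨⟨hx, hη⟩, hPx⟩)
      · exact Or.inl (Or.inr ⟨⟨hx, le_neg_of_le_neg hη⟩, hPx⟩)
  calc μ {x ∈ S | P x} ≤ _ := measure_mono hcover
    _ ≤ _ := measure_union_le _ _
    _ ≤ A + A + μ {x ∈ S | |h x| < η} := by
      gcongr
      exact (measure_union_le _ _).trans (add_le_add hge hle)

section Sublevel

variable {S : Set ℝ} {n : ℕ} {l t : ℝ}

-- The derivatives of `f 0` are carried as a family, so that the hypotheses restrict to any
-- subinterval, even a degenerate one, where `iteratedDerivWithin` would take junk values.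
lemma volume_abs_lt_le_of_le_abs_deriv_family (hS : Convex ℝ S) {f : ℕ → ℝ → ℝ}
    (hf : ∀ i < n, ∀ x ∈ S, HasDerivWithinAt (f i) (f (i + 1) x) S x)
    (hl : 0 < l) (hfn : ∀ x ∈ S, l ≤ |f n x|) (ht : 0 < t) :
    volume {x ∈ S | |f 0 x| < l * t ^ n} ≤ ENNReal.ofReal (2 * (2 ^ n - 1) * t) := by
  induction n generalizing S l with
  | zero =>
    have hempty : {x ∈ S | |f 0 x| < l * t ^ 0} = ∅ := by
      simpa [sep_eq_empty_iff_mem_false] using hfn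
    rw [hempty, measure_empty]
    exact zero_le
  | succ n ih =>
    have hfn_deriv := hf n n.lt_succ_self
    have hquasi : QuasilinearOn ℝ S (f n) :=
      quasilinearOn_of_hasDerivWithinAt_ne_zero hS hfn_deriv
        fun x hx => abs_pos.1 (hl.trans_le (hfn x hx))
    have hlarge : ∀ T ⊆ S, Convex ℝ T → (∀ x ∈ T, l * t ≤ |f n x|) →
        volume {x ∈ T | |f 0 x| < l * t ^ (n + 1)} ≤ ENNReal.ofReal (2 * (2 ^ n - 1) * t) := by
      intro T hTS hT hfT
      rw [pow_succ', ← mul_assoc]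
      exact ih hT (fun i hi x hx => (hf i (hi.trans n.lt_succ_self) x (hTS hx)).mono hTS)
        (mul_pos hl ht) hfT
    have hsmall : volume {x ∈ S | |f n x| < l * t} ≤ ENNReal.ofReal (2 * t) :=
      volume_abs_lt_le_of_mul_dist_le_dist hl fun x hx y hy =>
        mul_dist_le_dist_of_le_abs_deriv hS hfn_deriv hfn hx hy
    have hconst : (0 : ℝ) ≤ 2 ^ n - 1 := sub_nonneg.2 (one_le_pow₀ one_le_two)
    calc volume {x ∈ S | |f 0 x| < l * t ^ (n + 1)}
        ≤ ENNReal.ofReal (2 * (2 ^ n - 1) * t) + ENNReal.ofReal (2 * (2 ^ n - 1) * t) +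
            ENNReal.ofReal (2 * t) :=
          (measure_sep_le_of_quasilinearOn hquasi _ hlarge).trans (by gcongr)
      _ = ENNReal.ofReal (2 * (2 ^ (n + 1) - 1) * t) := by
        rw [← ENNReal.ofReal_add (by positivity) (by positivity),
          ← ENNReal.ofReal_add (by positivity) (by positivity)]
        congr 1
        ring

lemma volume_abs_lt_le_of_le_abs_iteratedDerivWithin (hS : Convex ℝ S) {g : ℝ → ℝ}
    (hg : ContDiffOn ℝ n g S) (hl : 0 < l) (hgn : ∀ x ∈ S, l ≤ |iteratedDerivWithin n g S x|)
    (ht : 0 < t) :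
    volume {x ∈ S | |g x| < l * t ^ n} ≤ ENNReal.ofReal (2 * (2 ^ n - 1) * t) := by
  rcases S.subsingleton_or_nontrivial with hsub | hnontriv
  · rw [measure_mono_null (sep_subset _ _) (hsub.measure_zero volume)]
    exact zero_le
  have huniq : UniqueDiffOn ℝ S :=
    uniqueDiffOn_convex hS (hS.nontrivial_iff_nonempty_interior.1 hnontriv)
  have hderiv : ∀ i < n, ∀ x ∈ S,
      HasDerivWithinAt (iteratedDerivWithin i g S) (iteratedDerivWithin (i + 1) g S x) S x := by
    intro i hi x hx
    rw [iteratedDerivWithin_succ]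
    exact (hg.differentiableOn_iteratedDerivWithin (mod_cast hi) huniq x hx).hasDerivWithinAt
  simpa only [iteratedDerivWithin_zero] using
    volume_abs_lt_le_of_le_abs_deriv_family hS hderiv hl hgn ht

lemma volume_abs_sub_mul_lt_le (g : ℝ → ℝ) (r δ : ℝ) (ht : 0 < t) :
    volume {x ∈ S | |(x - r) * g x| < δ * t} ≤
      ENNReal.ofReal (2 * t) + volume {x ∈ S | |g x| < δ} := by
  have hcover : {x ∈ S | |(x - r) * g x| < δ * t} ⊆
      Metric.ball r t ∪ {x ∈ S | |g x| < δ} := by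
    rintro x ⟨hx, hxδ⟩
    rcases lt_or_ge |x - r| t with hnear | hfar
    · exact Or.inl hnear
    · refine Or.inr ⟨hx, lt_of_mul_lt_mul_right ?_ ht.le⟩
      calc |g x| * t ≤ |g x| * |x - r| := by gcongr
        _ = |(x - r) * g x| := by rw [abs_mul, mul_comm]
        _ < δ * t := hxδ
  calc volume {x ∈ S | |(x - r) * g x| < δ * t} ≤ _ := measure_mono hcover
    _ ≤ _ := measure_union_le _ _
    _ = ENNReal.ofReal (2 * t) + volume {x ∈ S | |g x| < δ} := by rw [Real.volume_ball]

end Sublevel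

theorem stmt16_general {S : Set ℝ} (hS : Convex ℝ S) {n : ℕ} {g : ℝ → ℝ}
    (hg : ContDiffOn ℝ n g S) {l : ℝ} (hl : 0 < l)
    (hgn : ∀ x ∈ S, l ≤ |iteratedDerivWithin n g S x|) (r : ℝ) {ε : ℝ} (hε : 0 < ε) :
    volume {x ∈ S | |(x - r) * g x| < ε} ≤
      ENNReal.ofReal (2 ^ (n + 1) * (ε / l) ^ ((1 : ℝ) / ((n + 1 : ℕ) : ℝ))) := by
  set t : ℝ := (ε / l) ^ ((1 : ℝ) / ((n + 1 : ℕ) : ℝ)) with ht_def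
  have ht : 0 < t := by positivity
  have hlevel : ε = l * t ^ n * t := by
    rw [mul_assoc, ← pow_succ, ht_def, one_div, Real.rpow_inv_natCast_pow (by positivity) (by simp),
      mul_div_cancel₀ _ hl.ne']
  have hconst : (0 : ℝ) ≤ 2 ^ n - 1 := sub_nonneg.2 (one_le_pow₀ one_le_two)
  calc volume {x ∈ S | |(x - r) * g x| < ε}
      ≤ ENNReal.ofReal (2 * t) + volume {x ∈ S | |g x| < l * t ^ n} := by
        rw [hlevel]
        exact volume_abs_sub_mul_lt_le g r _ ht
    _ ≤ ENNReal.ofReal (2 * t) + ENNReal.ofReal (2 * (2 ^ n - 1) * t) := by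
        gcongr
        exact volume_abs_lt_le_of_le_abs_iteratedDerivWithin hS hg hl hgn ht
    _ = ENNReal.ofReal (2 ^ (n + 1) * t) := by
        rw [← ENNReal.ofReal_add (by positivity) (by positivity)]
        congr 1
        ring

/-- **Sublevel set estimate (4.16).** For each integer `p ≥ 2` there is a constant `d_p > 0`
such that: for every compact interval `[a,b]`, every `C^{p-1}` function `g` on `[a,b]` with
`|g^{(p-1)}(x)| > 1` on `[a,b]`, and every `r ∈ ℝ`, for all `ε > 0` the Lebesgue measure of
`{x ∈ [a,b] : |(x-r)·g(x)| < ε}` is at most `d_p · ε^{1/p}`. -/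
theorem stmt16 (p : ℕ) (hp : 2 ≤ p) :
    ∃ dp : ℝ, 0 < dp ∧
      ∀ (a b : ℝ), a ≤ b →
      ∀ g : ℝ → ℝ, ContDiffOn ℝ (p - 1) g (Icc a b) →
      (∀ x ∈ Icc a b, 1 < |iteratedDerivWithin (p - 1) g (Icc a b) x|) →
      ∀ r : ℝ, ∀ ε : ℝ, 0 < ε →
        volume {x ∈ Icc a b | |(x - r) * g x| < ε} ≤
          ENNReal.ofReal (dp * ε ^ ((1 : ℝ) / (p : ℝ))) := by
  obtain ⟨n, rfl⟩ := Nat.exists_eq_add_of_le' (one_le_two.trans hp)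
  have hpred : ((n + 1 : ℕ) : WithTop ℕ∞) - 1 = n := rfl
  refine ⟨2 ^ (n + 1), by positivity, fun a b _ g hg hgn r ε hε => ?_⟩
  simpa only [div_one] using stmt16_general (n := n) (convex_Icc a b) (hpred ▸ hg) one_pos
    (fun x hx => (hgn x hx).le) r hε
end

section
/- Let p ≥ 2 be an integer. There exists a constant c > 0, depending only on p, with the following property. Let f be a C^p real-valued function on a compact interval [a,b] with |f^{(p)}(x)| > 1 for all x ∈ [a,b]. Then for all λ ≠ 0, min( b − a, 1 / (|λ| · sup_{x∈[a,b]} |f'(x)|) ) ≤ c · |λ|^{−1/p}. -/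
/-!
By the mean value theorem, if `|g'| ≥ δ` on an interval of length `ℓ`, then `|g|` cannot be smaller
than `δ ℓ / 4` both somewhere in the first quarter and somewhere in the last one. So `|g| ≥ δ ℓ / 4`
on a whole quarter of the interval. Passing to a quarter `k` times turns a lower bound for the
derivative of order `k` into one for the function itself; from `f^(p)` down to `f'` this gives
`(b - a)^(p - 1) ≤ (4 · 4² ⋯ 4^(p - 1)) M = (2^(p - 1))^p M`, where `M = sup |f'|`. Since
`min x y ^ p ≤ x^(p - 1) y`, the minimum `X` of `b - a` and `1 / (|λ| M)` satisfies
`X^p ≤ (b - a)^(p - 1) / (|λ| M) ≤ (2^(p - 1))^p / |λ|`, which is the estimate with `c = 2^(p - 1)`.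
-/

open Set MeasureTheory

section DerivativeLowerBounds

variable {a b δ : ℝ}

lemma mul_abs_sub_le_abs_sub_of_le_abs_deriv {g g' : ℝ → ℝ} {s : Set ℝ} (hs : s.OrdConnected)
    (hg : ∀ x ∈ s, HasDerivWithinAt g (g' x) s x) (hg' : ∀ x ∈ s, δ ≤ |g' x|)
    {x y : ℝ} (hx : x ∈ s) (hy : y ∈ s) : δ * |y - x| ≤ |g y - g x| := by
  wlog hxy : x < y generalizing x y
  · rcases (not_lt.1 hxy).eq_or_lt with rfl | hyx
    · simp
    · simpa only [abs_sub_comm] using this hy hx hyx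
  have hsub : Icc x y ⊆ s := hs.out hx hy
  obtain ⟨ξ, hξ, hslope⟩ := exists_hasDerivAt_eq_slope g g' hxy
    (fun z hz => (hg z (hsub hz)).continuousWithinAt.mono hsub)
    (fun z hz => ((hg z (hsub (Ioo_subset_Icc_self hz))).mono hsub).hasDerivAt
      (Icc_mem_nhds hz.1 hz.2))
  have hδ : δ ≤ |g y - g x| / |y - x| := by
    rw [← abs_div, ← hslope]
    exact hg' ξ (hsub (Ioo_subset_Icc_self hξ))
  rwa [le_div_iff₀ (abs_pos.2 (sub_pos.2 hxy).ne')] at hδ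

lemma exists_quarter_forall_le_abs {g g' : ℝ → ℝ} (hab : a ≤ b) (hδ : 0 ≤ δ)
    (hg : ∀ x ∈ Icc a b, HasDerivWithinAt g (g' x) (Icc a b) x)
    (hg' : ∀ x ∈ Icc a b, δ ≤ |g' x|) :
    ∃ u v, a ≤ u ∧ v ≤ b ∧ v - u = (b - a) / 4 ∧ ∀ x ∈ Icc u v, δ * (b - a) / 4 ≤ |g x| := by
  by_cases hfirst : ∀ x ∈ Icc a (a + (b - a) / 4), δ * (b - a) / 4 ≤ |g x|
  · exact ⟨a, a + (b - a) / 4, le_rfl, by linarith, by ring, hfirst⟩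
  refine ⟨b - (b - a) / 4, b, by linarith, le_rfl, by ring, fun y hy => ?_⟩
  push Not at hfirst
  obtain ⟨x, hx, hgx⟩ := hfirst
  have hxy : (b - a) / 2 ≤ |y - x| := le_trans (by linarith [hx.2, hy.1]) (le_abs_self _)
  have hincr : δ * ((b - a) / 2) ≤ |g y| + |g x| :=
    calc δ * ((b - a) / 2) ≤ δ * |y - x| := by gcongr
      _ ≤ |g y - g x| := mul_abs_sub_le_abs_sub_of_le_abs_deriv ordConnected_Icc hg hg'
          ⟨hx.1, by linarith [hx.2]⟩ ⟨by linarith [hy.1], hy.2⟩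
      _ ≤ |g y| + |g x| := abs_sub _ _
  linarith

/-- A bound at a single point would not survive the induction on `k`. -/
lemma exists_subinterval_forall_le_abs (hab : a ≤ b) (hδ : 0 ≤ δ) (F : ℕ → ℝ → ℝ) (k : ℕ)
    (hF : ∀ i < k, ∀ x ∈ Icc a b, HasDerivWithinAt (F i) (F (i + 1) x) (Icc a b) x)
    (hFk : ∀ x ∈ Icc a b, δ ≤ |F k x|) :
    ∃ u v, a ≤ u ∧ v ≤ b ∧ v - u = (b - a) / 4 ^ k ∧
      ∀ x ∈ Icc u v, δ * (b - a) ^ k / 2 ^ (k * (k + 1)) ≤ |F 0 x| := by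
  have hℓ : 0 ≤ b - a := sub_nonneg.2 hab
  induction k generalizing F with
  | zero => exact ⟨a, b, le_rfl, le_rfl, by simp, by simpa using hFk⟩
  | succ k ih =>
    obtain ⟨u, v, hau, hvb, hlen, hF1⟩ :=
      ih (fun i => F (i + 1)) (fun i hi => hF (i + 1) (by lia)) hFk
    have huv : u ≤ v := sub_nonneg.1 (hlen ▸ div_nonneg hℓ (by positivity))
    have hsub : Icc u v ⊆ Icc a b := Icc_subset_Icc hau hvb
    obtain ⟨u', v', huu', hvv', hlen', hF0⟩ := exists_quarter_forall_le_abs huv (by positivity)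
      (fun x hx => (hF 0 k.succ_pos x (hsub hx)).mono hsub) hF1
    have hbound : δ * (b - a) ^ k / 2 ^ (k * (k + 1)) * (v - u) / 4 =
        δ * (b - a) ^ (k + 1) / 2 ^ ((k + 1) * (k + 1 + 1)) := by
      have hpow : (2 : ℝ) ^ ((k + 1) * (k + 1 + 1)) = 2 ^ (k * (k + 1)) * 4 ^ k * 4 := by
        rw [show (4 : ℝ) = 2 ^ 2 by norm_num, ← pow_mul, ← pow_add, ← pow_add]
        ring_nf
      rw [hlen, hpow, pow_succ]
      field_simp
    exact ⟨u', v', hau.trans huu', hvv'.trans hvb, by rw [hlen', hlen, pow_succ, div_div],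
      fun x hx => hbound ▸ hF0 x hx⟩

lemma mul_pow_div_le_sSup_abs_iteratedDerivWithin {f : ℝ → ℝ} {m k : ℕ} (hk : k ≠ 0)
    (hab : a ≤ b) (hδ : 0 ≤ δ)
    (hf : ∀ i < k, DifferentiableOn ℝ (iteratedDerivWithin (m + i) f (Icc a b)) (Icc a b))
    (hfk : ∀ x ∈ Icc a b, δ ≤ |iteratedDerivWithin (m + k) f (Icc a b) x|) :
    δ * (b - a) ^ k / 2 ^ (k * (k + 1)) ≤
      sSup ((fun x => |iteratedDerivWithin m f (Icc a b) x|) '' Icc a b) := by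
  have hbdd : BddAbove ((fun x => |iteratedDerivWithin m f (Icc a b) x|) '' Icc a b) :=
    isCompact_Icc.bddAbove_image (hf 0 hk.bot_lt).continuousOn.abs
  obtain ⟨u, v, hau, hvb, hlen, hu⟩ := exists_subinterval_forall_le_abs hab hδ
    (fun i => iteratedDerivWithin (m + i) f (Icc a b)) k
    (fun i hi x hx => by
      simpa only [← add_assoc, iteratedDerivWithin_succ] using (hf i hi x hx).hasDerivWithinAt) hfk
  have huv : u ≤ v := sub_nonneg.1 (hlen ▸ div_nonneg (sub_nonneg.2 hab) (by positivity))
  exact (hu u (left_mem_Icc.2 huv)).trans (le_csSup hbdd ⟨u, ⟨hau, huv.trans hvb⟩, rfl⟩)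

end DerivativeLowerBounds

lemma min_pow_succ_le_pow_mul {x y : ℝ} (hx : 0 ≤ x) (hy : 0 ≤ y) (k : ℕ) :
    min x y ^ (k + 1) ≤ x ^ k * y := by
  rw [pow_succ]
  gcongr
  · exact min_le_left x y
  · exact min_le_right x y

lemma min_one_div_mul_le_mul_rpow {k : ℕ} {C ℓ M μ : ℝ} (hC : 0 ≤ C) (hℓ : 0 ≤ ℓ) (hM : 0 < M)
    (hμ : 0 < μ) (h : ℓ ^ k ≤ C ^ (k + 1) * M) :
    min ℓ (1 / (μ * M)) ≤ C * μ ^ (-(1 : ℝ) / ((k + 1 : ℕ) : ℝ)) := by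
  have hroot : (μ ^ (-(1 : ℝ) / ((k + 1 : ℕ) : ℝ))) ^ (k + 1) = μ⁻¹ := by
    rw [← Real.rpow_mul_natCast hμ.le, div_mul_cancel₀ _ (by positivity), Real.rpow_neg_one]
  refine le_of_pow_le_pow_left₀ k.succ_ne_zero (by positivity) ?_
  calc min ℓ (1 / (μ * M)) ^ (k + 1) ≤ ℓ ^ k * (1 / (μ * M)) :=
        min_pow_succ_le_pow_mul hℓ (by positivity) k
    _ ≤ C ^ (k + 1) * M * (1 / (μ * M)) := by gcongr
    _ = C ^ (k + 1) * μ⁻¹ := by field_simp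
    _ = (C * μ ^ (-(1 : ℝ) / ((k + 1 : ℕ) : ℝ))) ^ (k + 1) := by rw [mul_pow, hroot]

lemma differentiableOn_iteratedDerivWithin_Icc {f : ℝ → ℝ} {a b : ℝ} {n i : ℕ}
    (hf : ContDiffOn ℝ n f (Icc a b)) (hi : i < n) :
    DifferentiableOn ℝ (iteratedDerivWithin i f (Icc a b)) (Icc a b) := by
  rcases lt_or_ge a b with hab | hba
  · exact hf.differentiableOn_iteratedDerivWithin (mod_cast hi) (uniqueDiffOn_Icc hab)
  · exact (subsingleton_Icc_of_ge hba).differentiableOn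

theorem stmt17_general {p : ℕ} (hp : 2 ≤ p) {a b : ℝ} (hab : a ≤ b) {f : ℝ → ℝ}
    (hf : ∀ i < p, DifferentiableOn ℝ (iteratedDerivWithin i f (Icc a b)) (Icc a b))
    (hfp : ∀ x ∈ Icc a b, 1 ≤ |iteratedDerivWithin p f (Icc a b) x|) {lam : ℝ} (hlam : lam ≠ 0) :
    (if sSup ((fun x => |iteratedDerivWithin 1 f (Icc a b) x|) '' Icc a b) = 0 then b - a
      else min (b - a)
        (1 / (|lam| * sSup ((fun x => |iteratedDerivWithin 1 f (Icc a b) x|) '' Icc a b)))) ≤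
      2 ^ (p - 1) * |lam| ^ (-(1 : ℝ) / (p : ℝ)) := by
  obtain ⟨k, rfl⟩ : ∃ k, p = k + 1 := ⟨p - 1, by lia⟩
  have hk : k ≠ 0 := by lia
  have hℓ : 0 ≤ b - a := sub_nonneg.2 hab
  set M := sSup ((fun x => |iteratedDerivWithin 1 f (Icc a b) x|) '' Icc a b)
  have hM : (b - a) ^ k ≤ (2 ^ k) ^ (k + 1) * M := by
    have hsup : 1 * (b - a) ^ k / 2 ^ (k * (k + 1)) ≤ M :=
      mul_pow_div_le_sSup_abs_iteratedDerivWithin hk hab zero_le_one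
        (fun i hi => hf (1 + i) (by lia)) (by rwa [add_comm 1 k])
    rwa [one_mul, pow_mul, div_le_iff₀' (by positivity)] at hsup
  split_ifs with hM0
  · have hpow : (b - a) ^ k = 0 := le_antisymm (by simpa [hM0] using hM) (by positivity)
    rw [eq_zero_of_pow_eq_zero hpow]
    positivity
  · have hMpos : 0 < M :=
      (nonneg_of_mul_nonneg_right ((pow_nonneg hℓ k).trans hM) (by positivity)).lt_of_ne' hM0
    exact min_one_div_mul_le_mul_rpow (by positivity) hℓ hMpos (abs_pos.2 hlam) hM

/-- **Estimate (4.7).** For each integer `p ≥ 2` there is a constant `c > 0`, depending only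
on `p`, such that: for every compact interval `[a,b]` and every `C^p` function `f` on `[a,b]`
with `|f⁽ᵖ⁾(x)| > 1` on `[a,b]`, for all `λ ≠ 0` one has
`min(b-a, 1/(|λ|·sup_{[a,b]}|f'|)) ≤ c·|λ|^{-1/p}`. Here `1/(|λ|·sup|f'|)` is interpreted as
`+∞` (so the min is `b - a`) if `f'` vanishes identically on `[a,b]`. -/
theorem stmt17 (p : ℕ) (hp : 2 ≤ p) :
    ∃ c : ℝ, 0 < c ∧
      ∀ (a b : ℝ), a ≤ b →
      ∀ f : ℝ → ℝ, ContDiffOn ℝ p f (Icc a b) →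
      (∀ x ∈ Icc a b, 1 < |iteratedDerivWithin p f (Icc a b) x|) →
      ∀ lam : ℝ, lam ≠ 0 →
        (if sSup ((fun x => |iteratedDerivWithin 1 f (Icc a b) x|) '' Icc a b) = 0 then b - a
         else min (b - a)
           (1 / (|lam| * sSup ((fun x => |iteratedDerivWithin 1 f (Icc a b) x|) '' Icc a b)))) ≤
        c * |lam| ^ (-(1 : ℝ) / (p : ℝ)) := by
  exact ⟨2 ^ (p - 1), by positivity, fun a b hab f hf hfp lam hlam => stmt17_general hp hab
    (fun i hi => differentiableOn_iteratedDerivWithin_Icc hf hi) (fun x hx => (hfp x hx).le) hlam⟩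
end

section
/- Let f be a real polynomial of degree l ≥ 1 and [a,b] a compact interval such that |f'(x)| > 1 for all x ∈ [a,b]. Then for all λ ≠ 0, ∫_a^b min(1, |f''(x)| / (|λ| (f'(x))²)) dx ≤ 2l / |λ|. -/
open Set MeasureTheory Polynomial

/-!
After discarding the `1` in the minimum, the integrand is `|λ|⁻¹ |g'|` with `g = 1 / f'`, so the
integral is controlled by the total variation of `g`. Between consecutive zeros of `g'`, that is, of
`f''`, the function `g` is monotone with values in `[-1, 1]`, so each such interval contributes at
most `2`. There are at most `deg f'` of them unless `f'' = 0`, when the integral vanishes.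
-/

section VariationBound

variable {g g' : ℝ → ℝ} {a b : ℝ}

lemma integral_abs_deriv_eq_abs_sub_of_forall_ne_zero (hab : a ≤ b)
    (hg : ContinuousOn g (Icc a b)) (hderiv : ∀ x ∈ Ioo a b, HasDerivAt g (g' x) x)
    (hint : IntervalIntegrable g' volume a b) (hne : ∀ x ∈ Ioo a b, g' x ≠ 0) :
    ∫ x in a..b, |g' x| = |g b - g a| := by
  have hnonneg : 0 ≤ ∫ x in a..b, |g' x| :=
    intervalIntegral.integral_nonneg hab fun x _ => abs_nonneg (g' x)
  rw [← abs_of_nonneg hnonneg]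
  -- Derivatives have the intermediate value property, so `g'` has constant sign on `(a, b)`.
  rcases hasDerivWithinAt_forall_lt_or_forall_gt_of_forall_ne (convex_Ioo a b)
    (fun x hx => (hderiv x hx).hasDerivWithinAt) hne with hneg | hpos
  · have hderiv_neg : ∀ x ∈ Ioo a b, HasDerivAt (-g) |g' x| x := fun x hx => by
      simpa only [abs_of_neg (hneg x hx)] using (hderiv x hx).neg
    rw [intervalIntegral.integral_eq_sub_of_hasDerivAt_of_le hab hg.neg hderiv_neg hint.abs,
      Pi.neg_apply, Pi.neg_apply, neg_sub_neg, abs_sub_comm]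
  · have hderiv_pos : ∀ x ∈ Ioo a b, HasDerivAt g |g' x| x := fun x hx => by
      simpa only [abs_of_pos (hpos x hx)] using hderiv x hx
    rw [intervalIntegral.integral_eq_sub_of_hasDerivAt_of_le hab hg hderiv_pos hint.abs]

lemma integral_abs_deriv_le_of_zeros_subset {M : ℝ} (s : Finset ℝ) (hab : a ≤ b)
    (hg : ContinuousOn g (Icc a b)) (hderiv : ∀ x ∈ Ioo a b, HasDerivAt g (g' x) x)
    (hint : IntervalIntegrable g' volume a b)
    (hM : ∀ x ∈ Icc a b, ∀ y ∈ Icc a b, |g x - g y| ≤ M)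
    (hs : ∀ x ∈ Ioo a b, g' x = 0 → x ∈ s) :
    ∫ x in a..b, |g' x| ≤ (s.card + 1) * M := by
  have hM0 : 0 ≤ M := (abs_nonneg _).trans
    (hM a (left_mem_Icc.2 hab) a (left_mem_Icc.2 hab))
  -- Cut at the largest point `c` of `s`: no zero lies to its right.
  induction s using Finset.induction_on_max generalizing b with
  | empty =>
    rw [integral_abs_deriv_eq_abs_sub_of_forall_ne_zero hab hg hderiv hint
      fun x hx h0 => by simpa only [Finset.notMem_empty] using hs x hx h0]
    simpa only [Finset.card_empty, Nat.cast_zero, zero_add, one_mul]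
      using hM b (right_mem_Icc.2 hab) a (left_mem_Icc.2 hab)
  | insert c s hmax ih =>
    rw [Finset.card_insert_of_notMem fun hc => (hmax c hc).false, Nat.cast_succ]
    by_cases hc : c ∈ Ioo a b
    · have hl : Icc a c ⊆ Icc a b := Icc_subset_Icc_right hc.2.le
      have hr : Icc c b ⊆ Icc a b := Icc_subset_Icc_left hc.1.le
      have hl' : Ioo a c ⊆ Ioo a b := Ioo_subset_Ioo_right hc.2.le
      have hr' : Ioo c b ⊆ Ioo a b := Ioo_subset_Ioo_left hc.1.le
      have hintl : IntervalIntegrable g' volume a c :=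
        hint.mono_set (by rwa [uIcc_of_le hc.1.le, uIcc_of_le hab])
      have hintr : IntervalIntegrable g' volume c b :=
        hint.mono_set (by rwa [uIcc_of_le hc.2.le, uIcc_of_le hab])
      have hleft : ∫ x in a..c, |g' x| ≤ (s.card + 1) * M :=
        ih hc.1.le (hg.mono hl) (fun x hx => hderiv x (hl' hx)) hintl
          (fun x hx y hy => hM x (hl hx) y (hl hy))
          fun x hx h0 => Finset.mem_of_mem_insert_of_ne (hs x (hl' hx) h0) hx.2.ne
      have hne : ∀ x ∈ Ioo c b, g' x ≠ 0 := fun x hx h0 =>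
        (hmax x (Finset.mem_of_mem_insert_of_ne (hs x (hr' hx) h0) hx.1.ne')).not_gt hx.1
      have hright : ∫ x in c..b, |g' x| ≤ M := by
        rw [integral_abs_deriv_eq_abs_sub_of_forall_ne_zero hc.2.le (hg.mono hr)
          (fun x hx => hderiv x (hr' hx)) hintr hne]
        exact hM b (right_mem_Icc.2 hab) c (Ioo_subset_Icc_self hc)
      rw [← intervalIntegral.integral_add_adjacent_intervals hintl.abs hintr.abs]
      linarith
    · have hbound : ∫ x in a..b, |g' x| ≤ (s.card + 1) * M :=
        ih hab hg hderiv hint hM fun x hx h0 =>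
          Finset.mem_of_mem_insert_of_ne (hs x hx h0) fun hxc => hc (hxc ▸ hx)
      linarith

end VariationBound

lemma abs_inv_sub_inv_le {x y c : ℝ} (hc : 0 < c) (hx : c ≤ |x|) (hy : c ≤ |y|) :
    |x⁻¹ - y⁻¹| ≤ 2 / c :=
  calc |x⁻¹ - y⁻¹| ≤ |x⁻¹| + |y⁻¹| := abs_sub _ _
    _ = |x|⁻¹ + |y|⁻¹ := by rw [abs_inv, abs_inv]
    _ ≤ c⁻¹ + c⁻¹ := by gcongr
    _ = 2 / c := by ring

section PolynomialReciprocal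

variable {p : ℝ[X]} {a b : ℝ}

lemma continuousOn_abs_derivative_div_sq {s : Set ℝ} (hp : ∀ x ∈ s, p.eval x ≠ 0) :
    ContinuousOn (fun x => |(derivative p).eval x| / (p.eval x) ^ 2) s :=
  ContinuousOn.div (by fun_prop) (by fun_prop) fun x hx => pow_ne_zero 2 (hp x hx)

lemma integral_abs_derivative_div_sq_le {c : ℝ} (hab : a ≤ b) (hc : 0 < c)
    (hp : ∀ x ∈ Icc a b, c ≤ |p.eval x|) :
    ∫ x in a..b, |(derivative p).eval x| / (p.eval x) ^ 2 ≤ 2 * p.natDegree / c := by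
  have hp0 : ∀ x ∈ Icc a b, p.eval x ≠ 0 := fun x hx => abs_pos.1 (hc.trans_le (hp x hx))
  by_cases hdeg : p.natDegree = 0
  · simp [derivative_of_natDegree_zero hdeg, hdeg]
  have hp' : derivative p ≠ 0 := mt derivative_eq_zero.1 hdeg
  let g' : ℝ → ℝ := fun x => -(derivative p).eval x / (p.eval x) ^ 2
  have hint : IntervalIntegrable g' volume a b :=
    ContinuousOn.intervalIntegrable_of_Icc hab <|
      ContinuousOn.div (by fun_prop) (by fun_prop) fun x hx => pow_ne_zero 2 (hp0 x hx)
  have hzeros : ∀ x ∈ Ioo a b, g' x = 0 → x ∈ (derivative p).roots.toFinset := by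
    intro x hx h0
    have hx0 : p.eval x ≠ 0 := hp0 x (Ioo_subset_Icc_self hx)
    simpa [g', hp', hx0] using h0
  have hcard : (derivative p).roots.toFinset.card + 1 ≤ p.natDegree :=
    ((Multiset.toFinset_card_le _).trans (card_roots' _)).trans_lt (natDegree_derivative_lt hdeg)
  calc ∫ x in a..b, |(derivative p).eval x| / (p.eval x) ^ 2
      = ∫ x in a..b, |g' x| := by simp only [g', abs_div, abs_neg, abs_sq]
    _ ≤ ((derivative p).roots.toFinset.card + 1) * (2 / c) :=
        integral_abs_deriv_le_of_zeros_subset _ hab (p.continuousOn.inv₀ hp0)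
          (fun x hx => (p.hasDerivAt x).inv (hp0 x (Ioo_subset_Icc_self hx))) hint
          (fun x hx y hy => abs_inv_sub_inv_le hc (hp x hx) (hp y hy)) hzeros
    _ ≤ p.natDegree * (2 / c) := by
        gcongr
        exact_mod_cast hcard
    _ = 2 * p.natDegree / c := by ring

end PolynomialReciprocal

/-- **Estimate (4.9).** Let `f` be a real polynomial of degree `l ≥ 1` and `[a,b]` a compact
interval with `|f'(x)| > 1` on `[a,b]`. Then for all `λ ≠ 0`,
`∫_a^b min(1, |f''(x)|/(|λ|(f'(x))²)) dx ≤ 2l/|λ|`. -/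
theorem stmt18 (f : Polynomial ℝ) (l : ℕ) (hdeg : f.natDegree = l) (hl : 1 ≤ l)
    (a b : ℝ) (hab : a ≤ b)
    (hf' : ∀ x ∈ Icc a b, 1 < |(derivative f).eval x|) :
    ∀ lam : ℝ, lam ≠ 0 →
      (∫ x in a..b,
          min 1 (|(derivative (derivative f)).eval x| /
            (|lam| * ((derivative f).eval x) ^ 2))) ≤
        2 * (l : ℝ) / |lam| := by
  intro lam _
  have hne : ∀ x ∈ Icc a b, (derivative f).eval x ≠ 0 := fun x hx =>
    abs_pos.1 (zero_lt_one.trans (hf' x hx))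
  have hcont : ContinuousOn (fun x => |(derivative (derivative f)).eval x| /
      (|lam| * ((derivative f).eval x) ^ 2)) (Icc a b) := by
    simpa only [div_div, mul_comm] using
      (continuousOn_abs_derivative_div_sq hne).div_const |lam|
  have hdeg' : (derivative f).natDegree ≤ l :=
    hdeg ▸ (natDegree_derivative_le f).trans (Nat.sub_le _ _)
  calc _ ≤ ∫ x in a..b, |(derivative (derivative f)).eval x| /
          (|lam| * ((derivative f).eval x) ^ 2) :=
        intervalIntegral.integral_mono_on hab
          ((continuousOn_const.inf hcont).intervalIntegrable_of_Icc hab)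
          (hcont.intervalIntegrable_of_Icc hab) fun x _ => min_le_right _ _
    _ = (∫ x in a..b, |(derivative (derivative f)).eval x| / ((derivative f).eval x) ^ 2) /
          |lam| := by
        simp only [← intervalIntegral.integral_div, div_div, mul_comm]
    _ ≤ 2 * (derivative f).natDegree / 1 / |lam| := by
        gcongr
        exact integral_abs_derivative_div_sq_le hab one_pos fun x hx => (hf' x hx).le
    _ ≤ 2 * l / |lam| := by
        rw [div_one]
        gcongr
end

section
/- Let f be a C³ real-valued function on a compact interval [c,d] such that f' is nonvanishing on [c,d], f'' and f''' are each nonvanishing on the open interval (c,d), sup_{x∈[c,d]} |f'(x)| ≤ 2·inf_{x∈[c,d]} |f'(x)|, and |f''(c)|/(f'(c))² = 1 and |f''(d)|/(f'(d))² = 1. Then for all x ∈ [c,d], |f''(x)|/(f'(x))² ≥ 1/4. -/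
open Set

/-!
The minimum of `|f''|` over `[c, d]` is attained at an endpoint: at an interior minimum `|f''|`,
which is `f''` or `-f''` near that point, would be differentiable with derivative zero,
contradicting `f''' ≠ 0`. Passing from `x` to that endpoint therefore does not increase `|f''|`,
while `(f')²` changes at most by a factor `(sup |f'| / inf |f'|)²`.
-/

section MinimumModulus

variable {E : Type*} [NormedAddCommGroup E] [NormedSpace ℝ E] {h : E → ℝ}

lemma fderiv_eq_zero_of_isLocalMin_abs {z : E} (hmin : IsLocalMin (fun x ↦ |h x|) z)
    (hz : h z ≠ 0) : fderiv ℝ h z = 0 := by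
  by_cases hdiff : DifferentiableAt ℝ h z
  · have habs : (SignType.sign (h z) : ℝ) • fderiv ℝ h z = 0 :=
      (hdiff.hasFDerivAt.abs hz).fderiv.symm.trans hmin.fderiv_eq_zero
    have hsign : (SignType.sign (h z) : ℝ) ≠ 0 := by
      rcases hz.lt_or_gt with hneg | hpos
      · simp [hneg]
      · simp [hpos]
    exact (smul_eq_zero.mp habs).resolve_left hsign
  · exact fderiv_zero_of_not_differentiableAt hdiff

lemma exists_mem_frontier_isMinOn_abs {s : Set E} (hs : IsCompact s) (hne : s.Nonempty)
    (hcont : ContinuousOn h s) (hzero : ∀ x ∈ interior s, h x ≠ 0)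
    (hcrit : ∀ x ∈ interior s, fderiv ℝ h x ≠ 0) :
    ∃ z ∈ frontier s, IsMinOn (fun x ↦ |h x|) s z := by
  obtain ⟨z, hz, hmin⟩ := hs.exists_isMinOn hne hcont.abs
  refine ⟨z, ⟨subset_closure hz, fun hint ↦ ?_⟩, hmin⟩
  exact hcrit z hint <| fderiv_eq_zero_of_isLocalMin_abs
    (hmin.isLocalMin (mem_interior_iff_mem_nhds.mp hint)) (hzero z hint)

end MinimumModulus

section IteratedDerivWithin

variable {F : Type*} [NormedAddCommGroup F] [NormedSpace ℝ F] {k : ℕ}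

lemma continuousOn_iteratedDerivWithin_Icc {f : ℝ → F} {c d : ℝ} {n : WithTop ℕ∞}
    (hf : ContDiffOn ℝ n f (Icc c d)) (hk : k ≤ n) :
    ContinuousOn (iteratedDerivWithin k f (Icc c d)) (Icc c d) := by
  rcases lt_or_ge c d with hcd | hdc
  · exact hf.continuousOn_iteratedDerivWithin hk (uniqueDiffOn_Icc hcd)
  · exact (subsingleton_Icc_of_ge hdc).continuousOn _

lemma iteratedDerivWithin_succ_eq_deriv_of_mem_interior {f : ℝ → F} {s : Set ℝ} {x : ℝ}
    (hx : x ∈ interior s) :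
    iteratedDerivWithin (k + 1) f s x = deriv (iteratedDerivWithin k f s) x := by
  rw [iteratedDerivWithin_succ, derivWithin_of_mem_nhds (mem_interior_iff_mem_nhds.mp hx)]

lemma exists_endpoint_abs_iteratedDerivWithin_le {f : ℝ → ℝ} {c d x : ℝ}
    (hf : ContDiffOn ℝ k f (Icc c d))
    (hzero : ∀ y ∈ Ioo c d, iteratedDerivWithin k f (Icc c d) y ≠ 0)
    (hsucc : ∀ y ∈ Ioo c d, iteratedDerivWithin (k + 1) f (Icc c d) y ≠ 0)
    (hx : x ∈ Icc c d) :
    ∃ z ∈ ({c, d} : Set ℝ),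
      |iteratedDerivWithin k f (Icc c d) z| ≤ |iteratedDerivWithin k f (Icc c d) x| := by
  rw [← interior_Icc] at hzero hsucc
  have hcrit : ∀ y ∈ interior (Icc c d), fderiv ℝ (iteratedDerivWithin k f (Icc c d)) y ≠ 0 := by
    intro y hy hy0
    apply hsucc y hy
    rw [iteratedDerivWithin_succ_eq_deriv_of_mem_interior hy, ← fderiv_apply_one_eq_deriv, hy0,
      zero_apply]
  obtain ⟨z, hz, hmin⟩ := exists_mem_frontier_isMinOn_abs isCompact_Icc ⟨x, hx⟩
    (continuousOn_iteratedDerivWithin_Icc hf le_rfl) hzero hcrit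
  exact ⟨z, frontier_Icc (hx.1.trans hx.2) ▸ hz, hmin hx⟩

end IteratedDerivWithin

lemma le_mul_of_sSup_image_le_mul_sInf_image {α : Type*} {u : α → ℝ} {s : Set α} {K : ℝ}
    (hK : 0 ≤ K) (habove : BddAbove (u '' s)) (hbelow : BddBelow (u '' s))
    (hsup : sSup (u '' s) ≤ K * sInf (u '' s)) {x y : α} (hx : x ∈ s) (hy : y ∈ s) :
    u x ≤ K * u y :=
  calc
    u x ≤ sSup (u '' s) := le_csSup habove (mem_image_of_mem u hx)
    _ ≤ K * sInf (u '' s) := hsup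
    _ ≤ K * u y := by gcongr; exact csInf_le hbelow (mem_image_of_mem u hy)

lemma div_sq_le_div_sq_of_abs_le_mul_abs {a K p q u v : ℝ} (ha : 0 < a) (hp : a ≤ p / u ^ 2)
    (hpq : p ≤ q) (huv : |u| ≤ K * |v|) (hvu : |v| ≤ K * |u|) : a / K ^ 2 ≤ q / v ^ 2 := by
  have hu : u ≠ 0 := by
    rintro rfl
    exact ha.not_ge (by simpa using hp)
  have hv : v ≠ 0 := by
    rintro rfl
    exact hu (by simpa using huv)
  have hp_nonneg : 0 ≤ p := ((div_pos_iff_of_pos_right (by positivity)).mp (ha.trans_le hp)).le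
  have hsq : v ^ 2 ≤ u ^ 2 * K ^ 2 := by
    rw [← mul_pow, mul_comm, sq_le_sq, abs_mul]
    exact hvu.trans (by gcongr; exact le_abs_self K)
  calc
    a / K ^ 2 ≤ p / u ^ 2 / K ^ 2 := by gcongr
    _ = p / (u ^ 2 * K ^ 2) := div_div _ _ _
    _ ≤ p / v ^ 2 := by gcongr
    _ ≤ q / v ^ 2 := by gcongr

theorem stmt19_general {c d a K : ℝ} {f : ℝ → ℝ} (ha : 0 < a) (hK : 0 ≤ K)
    (hf : ContDiffOn ℝ 2 f (Icc c d))
    (hf'' : ∀ x ∈ Ioo c d, iteratedDerivWithin 2 f (Icc c d) x ≠ 0)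
    (hf''' : ∀ x ∈ Ioo c d, iteratedDerivWithin 3 f (Icc c d) x ≠ 0)
    (hsup : sSup ((fun x ↦ |iteratedDerivWithin 1 f (Icc c d) x|) '' Icc c d) ≤
      K * sInf ((fun x ↦ |iteratedDerivWithin 1 f (Icc c d) x|) '' Icc c d))
    (hc : a ≤ |iteratedDerivWithin 2 f (Icc c d) c| / (iteratedDerivWithin 1 f (Icc c d) c) ^ 2)
    (hd : a ≤ |iteratedDerivWithin 2 f (Icc c d) d| / (iteratedDerivWithin 1 f (Icc c d) d) ^ 2) :
    ∀ x ∈ Icc c d,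
      a / K ^ 2 ≤
        |iteratedDerivWithin 2 f (Icc c d) x| / (iteratedDerivWithin 1 f (Icc c d) x) ^ 2 := by
  intro x hx
  have hcd : c ≤ d := hx.1.trans hx.2
  have hcompact : IsCompact ((fun x ↦ |iteratedDerivWithin 1 f (Icc c d) x|) '' Icc c d) :=
    isCompact_Icc.image_of_continuousOn
      (continuousOn_iteratedDerivWithin_Icc hf (by norm_num)).abs
  have hratio {y z : ℝ} (hy : y ∈ Icc c d) (hz : z ∈ Icc c d) :
      |iteratedDerivWithin 1 f (Icc c d) y| ≤ K * |iteratedDerivWithin 1 f (Icc c d) z| :=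
    le_mul_of_sSup_image_le_mul_sInf_image hK hcompact.bddAbove hcompact.bddBelow hsup hy hz
  obtain ⟨z, rfl | rfl, hzx⟩ := exists_endpoint_abs_iteratedDerivWithin_le hf hf'' hf''' hx
  · have hz := left_mem_Icc.mpr hcd
    exact div_sq_le_div_sq_of_abs_le_mul_abs ha hc hzx (hratio hz hx) (hratio hx hz)
  · have hz := right_mem_Icc.mpr hcd
    exact div_sq_le_div_sq_of_abs_le_mul_abs ha hd hzx (hratio hz hx) (hratio hx hz)

/-- **Lower bound (5.31) for type 2B intervals.** Let `f` be `C³` on a compact interval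
`[c,d]` with `f'` nonvanishing on `[c,d]`, `f''` and `f'''` nonvanishing on `(c,d)`,
`sup_{[c,d]}|f'| ≤ 2·inf_{[c,d]}|f'|`, and `|f''(c)|/(f'(c))² = 1 = |f''(d)|/(f'(d))²`.
Then `|f''(x)|/(f'(x))² ≥ 1/4` for all `x ∈ [c,d]`. -/
theorem stmt19 (c d : ℝ) (hcd : c ≤ d) (f : ℝ → ℝ)
    (hf : ContDiffOn ℝ 3 f (Icc c d))
    (hf' : ∀ x ∈ Icc c d, iteratedDerivWithin 1 f (Icc c d) x ≠ 0)
    (hf'' : ∀ x ∈ Ioo c d, iteratedDerivWithin 2 f (Icc c d) x ≠ 0)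
    (hf''' : ∀ x ∈ Ioo c d, iteratedDerivWithin 3 f (Icc c d) x ≠ 0)
    (htype2 : sSup ((fun x => |iteratedDerivWithin 1 f (Icc c d) x|) '' Icc c d) ≤
      2 * sInf ((fun x => |iteratedDerivWithin 1 f (Icc c d) x|) '' Icc c d))
    (hc : |iteratedDerivWithin 2 f (Icc c d) c| / (iteratedDerivWithin 1 f (Icc c d) c) ^ 2 = 1)
    (hd : |iteratedDerivWithin 2 f (Icc c d) d| / (iteratedDerivWithin 1 f (Icc c d) d) ^ 2 = 1) :
    ∀ x ∈ Icc c d,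
      1 / 4 ≤
        |iteratedDerivWithin 2 f (Icc c d) x| / (iteratedDerivWithin 1 f (Icc c d) x) ^ 2 := by
  rw [show (1 / 4 : ℝ) = 1 / 2 ^ 2 by norm_num]
  exact stmt19_general one_pos zero_le_two (hf.of_le (by norm_num)) hf'' hf''' htype2 hc.ge hd.ge
end
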